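/- Let p ∈ [1, 3/2) and let (u, w, b, Π) be a smooth solution of the stationary magneto-micropolar equations on ℝ³ with u, b, w bounded on ℝ³. Then there exists a constant C > 0 (depending only on p and on ‖u‖_{L^∞}, ‖b‖_{L^∞}, ‖w‖_{L^∞}) such that for all R > 1: ∫_{B_R} (|∇u|² + |∇b|² + |∇w|²) dx ≤ C (R^{1 − 3/p} + R^{2 − 3/p}) (‖u‖_{L^p(B_{2R})} + ‖b‖_{L^p(B_{2R})} + ‖w‖_{L^p(B_{2R})}). -/

import Mathlib

open MeasureTheory Real Filter Metric
open scoped Topology ENNReal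

noncomputable section

/-- Three-dimensional Euclidean space. -/
abbrev E3 := EuclideanSpace ℝ (Fin 3)

/-- Partial derivative in the `i`-th coordinate direction. -/
def pd (i : Fin 3) (f : E3 → ℝ) (x : E3) : ℝ := fderiv ℝ f x (EuclideanSpace.single i 1)

/-- Laplacian of a scalar function. -/
def lap (f : E3 → ℝ) (x : E3) : ℝ := ∑ i, pd i (fun y => pd i f y) x

/-- Divergence of a vector field. -/
def vdiv (v : E3 → E3) (x : E3) : ℝ := ∑ i, pd i (fun y => v y i) x

/-- Curl of a vector field on ℝ³. -/
def curl3 (v : E3 → E3) (x : E3) : Fin 3 → ℝ :=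
  ![pd 1 (fun y => v y 2) x - pd 2 (fun y => v y 1) x,
    pd 2 (fun y => v y 0) x - pd 0 (fun y => v y 2) x,
    pd 0 (fun y => v y 1) x - pd 1 (fun y => v y 0) x]

/-- Squared norm of the full gradient of a vector field: |∇v|² = Σᵢⱼ (∂ᵢ vⱼ)². -/
def gradSq (v : E3 → E3) (x : E3) : ℝ := ∑ j, ∑ i, (pd i (fun y => v y j) x) ^ 2

/-- The open ball of radius `r` centered at the origin. -/
def ball3 (r : ℝ) : Set E3 := Metric.ball (0 : E3) r

/-- `(u, w, b, Π)` is a smooth solution of the stationary magneto-micropolar equations on ℝ³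
(with all physical constants set to 1):
−Δu + (u·∇)u + ∇Π = ∇×w + (b·∇)b; −Δw + (u·∇)w = ∇(div w) + ∇×u − 2w;
−Δb + (u·∇)b = (b·∇)u; div u = 0, div b = 0. -/
structure IsMMPSolution (u w b : E3 → E3) (P : E3 → ℝ) : Prop where
  smooth_u : ContDiff ℝ (⊤ : ℕ∞) u
  smooth_w : ContDiff ℝ (⊤ : ℕ∞) w
  smooth_b : ContDiff ℝ (⊤ : ℕ∞) b
  smooth_P : ContDiff ℝ (⊤ : ℕ∞) P
  eq_u : ∀ x : E3, ∀ j : Fin 3,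
    -(lap (fun y => u y j) x) + (∑ i, u x i * pd i (fun y => u y j) x) + pd j P x
      = curl3 w x j + ∑ i, b x i * pd i (fun y => b y j) x
  eq_w : ∀ x : E3, ∀ j : Fin 3,
    -(lap (fun y => w y j) x) + (∑ i, u x i * pd i (fun y => w y j) x)
      = pd j (fun y => vdiv w y) x + curl3 u x j - 2 * w x j
  eq_b : ∀ x : E3, ∀ j : Fin 3,
    -(lap (fun y => b y j) x) + (∑ i, u x i * pd i (fun y => b y j) x)
      = ∑ i, b x i * pd i (fun y => u y j) x
  div_u : ∀ x : E3, vdiv u x = 0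
  div_b : ∀ x : E3, vdiv b x = 0

/-- The `Lᵖ` norm of a vector field over a set `S` (for `p` a positive real). -/
def lpnorm (p : ℝ) (v : E3 → E3) (S : Set E3) : ℝ := (∫ x in S, ‖v x‖ ^ p) ^ (1 / p)

/-!
Testing the momentum, micro-rotation and magnetic equations with `η² u`, `η² w` and `η² b` for a
cutoff `η` bounds the Dirichlet integral over `B_R` by the `L²` masses on `B_{2R}`, weighted by
derivatives of `η`, and by the work `∫ η² u · ∇P` of the pressure. In this step the curl coupling
is absorbed thanks to `∫ |∇u|² = ∫ |curl u|²`, valid up to derivatives of `η` since `div u = 0`.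

Nothing is known about the pressure, so it has to be eliminated. If `Z` is compactly supported and
has the same divergence as `η² u`, then `∫ η² u · ∇P = ∫ Z · ∇P`, and the momentum equation together
with partial integration turns the latter into integrals of `u`, `b`, `w` against derivatives of
`Z`. Only `ΔZ` up to a gradient `∇E` matters there, because `u` is orthogonal to gradients. Such a
field is `Z = Y - ∇D` with `Yⱼ = ΔQⱼ + (η² u)ⱼ` and `D = div Q`, for which `ΔZ + ∇ΔD = ΔY`; the
potential `Qⱼ = χ q`, with a cutoff `χ` and the solution `q` of `(c - Δ) q = (η² u)ⱼ`, makes `Y` a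
first-order expression in `q`, so that two derivatives of `Y` cost only the `L²` norm of `u`.

Scaling the cutoffs and the corrector to radius `R` produces the factor `R⁻¹ + R⁻²`, and Hölder's
inequality together with the bounds on `u`, `b`, `w` replaces the `L²` masses by `Lᵖ` norms.
-/

/-- Smooth maps between real normed spaces, the class in which the whole argument takes place. -/
local notation "Smooth" => ContDiff ℝ (⊤ : ℕ∞)

section SmoothMaps

variable {E F : Type*} [NormedAddCommGroup E] [NormedSpace ℝ E] [NormedAddCommGroup F]
  [NormedSpace ℝ F] {f : E → F}

@[fun_prop]
lemma contDiff_two_of_top (hf : Smooth f) : ContDiff ℝ 2 f :=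
  contDiff_infty.1 hf 2

@[fun_prop]
lemma differentiable_of_top (hf : Smooth f) : Differentiable ℝ f :=
  hf.differentiable (by simp)

end SmoothMaps

section PartialDerivatives

variable {f g : E3 → ℝ}

@[fun_prop]
lemma contDiff_pd (hf : Smooth f) (i : Fin 3) : Smooth (pd i f) :=
  (hf.fderiv_right (m := (⊤ : ℕ∞)) le_rfl).clm_apply contDiff_const

@[fun_prop]
lemma contDiff_lap (hf : Smooth f) : Smooth (lap f) := by
  unfold lap
  fun_prop

lemma pd_const (i : Fin 3) (c : ℝ) : pd i (fun _ => c) = 0 := by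
  ext x
  simp [pd]

lemma pd_add (hf : Differentiable ℝ f) (hg : Differentiable ℝ g) (i : Fin 3) :
    pd i (fun y => f y + g y) = fun x => pd i f x + pd i g x := by
  ext x
  simp [pd, fderiv_fun_add (hf x) (hg x)]

lemma pd_sub (hf : Differentiable ℝ f) (hg : Differentiable ℝ g) (i : Fin 3) :
    pd i (fun y => f y - g y) = fun x => pd i f x - pd i g x := by
  ext x
  simp [pd, fderiv_fun_sub (hf x) (hg x)]

lemma pd_sum {ι : Type*} {s : Finset ι} {F : ι → E3 → ℝ} (hF : ∀ k, Differentiable ℝ (F k))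
    (i : Fin 3) : pd i (fun y => ∑ k ∈ s, F k y) = fun x => ∑ k ∈ s, pd i (F k) x := by
  ext x
  simp [pd, fderiv_fun_sum fun k _ => hF k x]

lemma pd_mul (hf : Differentiable ℝ f) (hg : Differentiable ℝ g) (i : Fin 3) :
    pd i (fun y => f y * g y) = fun x => f x * pd i g x + pd i f x * g x := by
  ext x
  simp [pd, fderiv_fun_mul (hf x) (hg x), mul_comm]

lemma pd_const_mul (hf : Differentiable ℝ f) (c : ℝ) (i : Fin 3) :
    pd i (fun y => c * f y) = fun x => c * pd i f x := by
  ext x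
  simp [pd, fderiv_const_mul (hf x)]

lemma pd_sq (hf : Differentiable ℝ f) (i : Fin 3) :
    pd i (fun y => f y ^ 2) = fun x => 2 * f x * pd i f x := by
  ext x
  simp [pd, fderiv_fun_pow 2 (hf x)]

lemma pd_comp_smul (c : ℝ) (i : Fin 3) :
    pd i (fun y => f (c • y)) = fun x => c * pd i f (c • x) := by
  ext x
  simp [pd, fderiv_comp_smul]

lemma pd_pd_apply (hf : ContDiff ℝ 2 f) (i j : Fin 3) (x : E3) : pd i (pd j f) x
    = fderiv ℝ (fderiv ℝ f) x (EuclideanSpace.single i 1) (EuclideanSpace.single j 1) := by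
  have hd : DifferentiableAt ℝ (fderiv ℝ f) x :=
    (hf.fderiv_right (m := 1) le_rfl).differentiable one_ne_zero x
  change fderiv ℝ (fun y => fderiv ℝ f y (EuclideanSpace.single j 1)) x _ = _
  rw [fderiv_clm_apply hd (by fun_prop)]
  simp

lemma pd_comm (hf : ContDiff ℝ 2 f) (i j : Fin 3) : pd i (pd j f) = pd j (pd i f) := by
  ext x
  rw [pd_pd_apply hf, pd_pd_apply hf]
  exact hf.contDiffAt.isSymmSndFDerivAt (by simp) _ _

lemma pd_lap (hf : Smooth f) (i : Fin 3) : pd i (lap f) = lap (pd i f) := by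
  change pd i (fun x => ∑ k, pd k (pd k f) x) = _
  rw [pd_sum fun k => by fun_prop]
  ext x
  refine Finset.sum_congr rfl fun k _ => ?_
  rw [pd_comm (by fun_prop) i k, pd_comm (by fun_prop) i k]

lemma hasCompactSupport_apply {v : E3 → E3} (hv : HasCompactSupport v) (j : Fin 3) :
    HasCompactSupport fun x => v x j :=
  hv.comp_left (g := fun z : E3 => z j) rfl

lemma tsupport_pd_subset (f : E3 → ℝ) (i : Fin 3) : tsupport (pd i f) ⊆ tsupport f :=
  tsupport_fderiv_apply_subset ℝ _

lemma hasCompactSupport_pd (hf : HasCompactSupport f) (i : Fin 3) : HasCompactSupport (pd i f) :=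
  hf.fderiv_apply ℝ _

lemma tsupport_subset_of_forall_eq_zero {ι F : Type*} [Finite ι] [Zero F] {v : E3 → F}
    {g : ι → E3 → ℝ} {S : Set E3} (hg : ∀ k, tsupport (g k) ⊆ S)
    (hv : ∀ x, (∀ k, g k x = 0) → v x = 0) : tsupport v ⊆ S := by
  have : Function.support v ⊆ ⋃ k, tsupport (g k) := fun x hx => by
    by_contra! hx'
    exact hx (hv x fun k => image_eq_zero_of_notMem_tsupport fun hk =>
      hx' (Set.mem_iUnion.2 ⟨k, hk⟩))
  exact (closure_minimal this (isClosed_iUnion_of_finite fun k => isClosed_tsupport _)).trans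
    (Set.iUnion_subset hg)

lemma tsupport_fun_add_subset {S : Set E3} (hf : tsupport f ⊆ S) (hg : tsupport g ⊆ S) :
    tsupport (fun x => f x + g x) ⊆ S :=
  (tsupport_add f g).trans (Set.union_subset hf hg)

lemma tsupport_fun_sq_subset (f : E3 → ℝ) : tsupport (fun x => f x ^ 2) ⊆ tsupport f := by
  simpa only [sq] using tsupport_mul_subset_left

lemma tsupport_fun_sum_subset {ι : Type*} [Fintype ι] {F : ι → E3 → ℝ} {S : Set E3}
    (hF : ∀ k, tsupport (F k) ⊆ S) : tsupport (fun x => ∑ k, F k x) ⊆ S :=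
  tsupport_subset_of_forall_eq_zero hF fun _ hx => Finset.sum_eq_zero fun k _ => hx k

lemma tsupport_subset_of_forall_apply {v : E3 → E3} {S : Set E3}
    (h : ∀ j, tsupport (fun x => v x j) ⊆ S) : tsupport v ⊆ S :=
  tsupport_subset_of_forall_eq_zero h fun _ hx => PiLp.ext hx

lemma tsupport_apply_subset (v : E3 → E3) (j : Fin 3) :
    tsupport (fun x => v x j) ⊆ tsupport v :=
  tsupport_comp_subset (g := fun z : E3 => z j) rfl v

lemma tsupport_lap_subset (f : E3 → ℝ) : tsupport (lap f) ⊆ tsupport f :=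
  tsupport_fun_sum_subset fun i => (tsupport_pd_subset _ i).trans (tsupport_pd_subset f i)

lemma tsupport_vdiv_subset (v : E3 → E3) : tsupport (vdiv v) ⊆ tsupport v :=
  tsupport_fun_sum_subset fun j => (tsupport_pd_subset _ j).trans (tsupport_apply_subset v j)

end PartialDerivatives

section ZeroIntegral

/-- The space of integrable functions with zero integral. Identities between integrals obtained
by partial integration are congruences between integrands modulo this space. -/
def integralKer {α : Type*} [MeasurableSpace α] (μ : Measure α) : Submodule ℝ (α → ℝ) where
  carrier := {f | Integrable f μ ∧ ∫ x, f x ∂μ = 0}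
  zero_mem' := ⟨integrable_zero _ _ _, by simp⟩
  add_mem' hf hg := ⟨hf.1.add hg.1, by simp [integral_add hf.1 hg.1, hf.2, hg.2]⟩
  smul_mem' c f hf := ⟨hf.1.smul c, by simp [integral_const_mul, hf.2]⟩

lemma integral_le_of_le_add_mem_integralKer {α : Type*} [MeasurableSpace α] {μ : Measure α}
    {e f g : α → ℝ} (hf : ∀ x, 0 ≤ f x) (he : e ∈ integralKer μ) (hg : Integrable g μ)
    (h : ∀ x, f x ≤ e x + g x) : ∫ x, f x ∂μ ≤ ∫ x, g x ∂μ := by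
  calc ∫ x, f x ∂μ ≤ ∫ x, e x + g x ∂μ :=
        integral_mono_of_nonneg (.of_forall hf) (he.1.add hg) (.of_forall h)
    _ = ∫ x, g x ∂μ := by rw [integral_add he.1 hg, he.2, zero_add]

/-- The derivative `(v · ∇) f` of a scalar function along a vector field. -/
def advect (v : E3 → E3) (f : E3 → ℝ) (x : E3) : ℝ := ∑ i, v x i * pd i f x

variable {f g : E3 → ℝ} {v w : E3 → E3}

lemma advect_eq_zero_of_notMem_tsupport {x : E3} (hx : x ∉ tsupport f) : advect v f x = 0 :=
  Finset.sum_eq_zero fun i _ => by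
    rw [image_eq_zero_of_notMem_tsupport fun hx' => hx (tsupport_pd_subset _ i hx'), mul_zero]

@[fun_prop]
lemma contDiff_vdiv (hv : Smooth v) : Smooth (vdiv v) := by
  unfold vdiv
  fun_prop

lemma pd_mem_integralKer_of_integrable (hf : Differentiable ℝ f) (hfi : Integrable f) {i : Fin 3}
    (hpd : Integrable (pd i f)) : pd i f ∈ integralKer volume := by
  refine ⟨hpd, ?_⟩
  have parts := integral_mul_fderiv_eq_neg_fderiv_mul_of_integrable (μ := volume) (𝕜 := ℝ)
    (f := fun _ : E3 => (1 : ℝ)) (g := f) (v := EuclideanSpace.single i 1) (by simp)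
    (by simp only [one_mul]; exact hpd) (by simpa using hfi) (by simp) (fun x _ => hf x)
  simpa [pd] using parts

lemma pd_mem_integralKer (hf : Smooth f) (hfc : HasCompactSupport f) (i : Fin 3) :
    pd i f ∈ integralKer volume :=
  pd_mem_integralKer_of_integrable (by fun_prop) (hf.continuous.integrable_of_hasCompactSupport hfc)
    ((contDiff_pd hf i).continuous.integrable_of_hasCompactSupport (hasCompactSupport_pd hfc i))

lemma sum_pd_mem_integralKer {F : Fin 3 → E3 → ℝ} (hF : ∀ i, Smooth (F i))
    (hFc : ∀ i, HasCompactSupport (F i)) :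
    (fun x => ∑ i, pd i (F i) x) ∈ integralKer volume := by
  convert sum_mem fun i (_ : i ∈ Finset.univ) => pd_mem_integralKer (hF i) (hFc i) i using 1
  ext x
  simp

lemma advect_add_mul_vdiv_mem_integralKer (hv : Smooth v) (hf : Smooth f)
    (hfc : HasCompactSupport fun x => f x • v x) :
    (fun x => advect v f x + f x * vdiv v x) ∈ integralKer volume := by
  convert sum_pd_mem_integralKer (F := fun i x => f x * v x i) (by fun_prop)
    (fun i => hasCompactSupport_apply hfc i) using 1
  ext x
  simp (disch := fun_prop) only [pd_mul, advect, vdiv, Fin.sum_univ_three]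
  ring

lemma advect_mem_integralKer (hv : Smooth v) (hdiv : ∀ x, vdiv v x = 0) (hf : Smooth f)
    (hfc : HasCompactSupport fun x => f x • v x) : advect v f ∈ integralKer volume := by
  simpa [hdiv] using advect_add_mul_vdiv_mem_integralKer hv hf hfc

lemma inner_curl_sub_inner_curl_mem_integralKer (hv : Smooth v) (hw : Smooth w)
    (hvc : HasCompactSupport v) :
    (fun x => ∑ j, v x j * curl3 w x j - ∑ j, w x j * curl3 v x j) ∈ integralKer volume := by
  have hvc' := hasCompactSupport_apply hvc
  convert sum_pd_mem_integralKer
    (F := fun i x => w x (i + 1) * v x (i + 2) - w x (i + 2) * v x (i + 1))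
    (by fun_prop) (fun i => (hvc' _).mul_left.sub (hvc' _).mul_left) using 1
  ext x
  simp (disch := fun_prop) [curl3, pd_mul, pd_sub, Fin.sum_univ_three]
  ring

lemma mul_lap_sub_mul_lap_mem_integralKer (hf : Smooth f) (hg : Smooth g)
    (hgc : HasCompactSupport g) :
    (fun x => f x * lap g x - lap f x * g x) ∈ integralKer volume := by
  convert sum_pd_mem_integralKer (F := fun i x => f x * pd i g x - pd i f x * g x)
    (by fun_prop) (fun i => (hasCompactSupport_pd hgc i).mul_left.sub hgc.mul_left) using 1
  ext x
  simp (disch := fun_prop) only [pd_mul, pd_sub, lap, Fin.sum_univ_three]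
  ring

end ZeroIntegral

section VectorCalculus

open scoped Gradient
open Matrix

variable {f g φ : E3 → ℝ} {u v w b : E3 → E3}

lemma gradient_apply_eq_pd (f : E3 → ℝ) (x : E3) (i : Fin 3) : (∇ f x) i = pd i f x := by
  have : inner ℝ (∇ f x) (EuclideanSpace.single i 1) = pd i f x := inner_gradient_left
  rw [← this, EuclideanSpace.inner_single_right]
  simp

lemma tsupport_gradient_subset (f : E3 → ℝ) : tsupport (∇ f) ⊆ tsupport f :=
  tsupport_subset_of_forall_apply fun j => by
    simp only [gradient_apply_eq_pd]
    exact tsupport_pd_subset f j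

lemma advect_mul (hf : Differentiable ℝ f) (hg : Differentiable ℝ g) :
    advect v (fun x => f x * g x) = fun x => f x * advect v g x + advect v f x * g x := by
  ext x
  simp only [advect, pd_mul hf hg, mul_add, Finset.sum_add_distrib, Finset.mul_sum, Finset.sum_mul]
  simp only [mul_assoc, mul_left_comm]

lemma vdiv_smul (hφ : Differentiable ℝ φ) (hv : Differentiable ℝ v) :
    vdiv (fun x => φ x • v x) = fun x => φ x * vdiv v x + advect v φ x := by
  ext x
  simp (disch := fun_prop) only [vdiv, advect, PiLp.smul_apply, smul_eq_mul, pd_mul,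
    Fin.sum_univ_three]
  ring

lemma curl3_smul (hφ : Differentiable ℝ φ) (hv : Differentiable ℝ v) (x : E3) :
    curl3 (fun x => φ x • v x) x = φ x • curl3 v x + (∇ φ x).ofLp ⨯₃ (v x).ofLp := by
  ext i
  fin_cases i <;>
    simp (disch := fun_prop) [curl3, pd_mul, cross_apply, gradient_apply_eq_pd] <;> ring

/-- The squared norm of the curl. -/
def curlSq (v : E3 → E3) (x : E3) : ℝ := ∑ j, curl3 v x j ^ 2

lemma advection_diffusion_energy_mem_integralKer (hu : Smooth u) (hdiv : ∀ x, vdiv u x = 0)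
    (hf : Smooth f) (hφ : Smooth φ) (hφc : HasCompactSupport φ) :
    (fun x => φ x * (f x * (-lap f x + advect u f x))
      - (φ x * ∑ i, pd i f x ^ 2 - f x ^ 2 / 2 * (lap φ x + advect u φ x)))
      ∈ integralKer volume := by
  convert add_mem (sub_mem
      (sum_pd_mem_integralKer (F := fun i x => f x * f x / 2 * pd i φ x) (by fun_prop)
        fun i => (hasCompactSupport_pd hφc i).mul_left)
      (sum_pd_mem_integralKer (F := fun i x => φ x * (f x * pd i f x)) (by fun_prop)
        fun i => hφc.mul_right))
    (advect_mem_integralKer (f := fun x => φ x * (f x * f x / 2)) hu hdiv (by fun_prop)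
      hφc.mul_right.smul_right) using 1
  ext x
  simp (disch := fun_prop) only [Pi.add_apply, Pi.sub_apply, div_eq_mul_inv, advect_mul, pd_mul,
    lap, Fin.sum_univ_three, pd_const, advect]
  simp only [Pi.zero_apply]
  ring

lemma vector_advection_diffusion_energy_mem_integralKer (hu : Smooth u)
    (hdiv : ∀ x, vdiv u x = 0) (hv : Smooth v) (hφ : Smooth φ) (hφc : HasCompactSupport φ) :
    (fun x => φ x * (∑ j, v x j * (-lap (fun y => v y j) x + advect u (fun y => v y j) x))
      - (φ x * gradSq v x - ‖v x‖ ^ 2 / 2 * (lap φ x + advect u φ x)))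
      ∈ integralKer volume := by
  convert sum_mem fun j (_ : j ∈ Finset.univ) => advection_diffusion_energy_mem_integralKer
    (f := fun x => v x j) hu hdiv (by fun_prop) hφ hφc using 1
  ext x
  simp only [Finset.sum_apply, Finset.sum_sub_distrib, Finset.mul_sum, gradSq,
    EuclideanSpace.real_norm_sq_eq, Finset.sum_div, Finset.sum_mul]

lemma inner_advect_add_inner_advect_mem_integralKer (hb : Smooth b) (hdiv : ∀ x, vdiv b x = 0)
    (hv : Smooth v) (hw : Smooth w) (hvc : HasCompactSupport v) :
    (fun x => ∑ j, v x j * advect b (fun y => w y j) x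
      + ∑ j, w x j * advect b (fun y => v y j) x) ∈ integralKer volume := by
  have hc := hasCompactSupport_apply hvc
  convert sum_mem fun j (_ : j ∈ Finset.univ) =>
    advect_mem_integralKer (f := fun x => v x j * w x j) hb hdiv (by fun_prop)
      (hc j).mul_right.smul_right using 1
  ext x
  simp (disch := fun_prop) only [advect_mul, Finset.sum_apply, Finset.sum_add_distrib]
  simp only [mul_comm]

lemma mul_inner_advect_add_inner_advect_mem_integralKer (hb : Smooth b)
    (hdiv : ∀ x, vdiv b x = 0) (hv : Smooth v) (hw : Smooth w) (hφ : Smooth φ)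
    (hφc : HasCompactSupport φ) :
    (fun x => φ x * (∑ j, v x j * advect b (fun y => w y j) x
      + ∑ j, w x j * advect b (fun y => v y j) x) + inner ℝ (v x) (w x) * advect b φ x)
      ∈ integralKer volume := by
  convert inner_advect_add_inner_advect_mem_integralKer (v := fun x => φ x • v x) hb hdiv
    (by fun_prop) hw hφc.smul_right using 1
  ext x
  simp (disch := fun_prop) only [PiLp.smul_apply, smul_eq_mul, advect_mul, PiLp.inner_apply,
    RCLike.inner_apply, conj_trivial, Fin.sum_univ_three]
  ring

lemma mul_inner_curl_mem_integralKer (hv : Smooth v) (hw : Smooth w) (hφ : Smooth φ)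
    (hφc : HasCompactSupport φ) :
    (fun x => φ x * ∑ j, v x j * curl3 w x j
      - (φ x * ∑ j, w x j * curl3 v x j + ∑ j, w x j * ((∇ φ x).ofLp ⨯₃ (v x).ofLp) j))
      ∈ integralKer volume := by
  convert inner_curl_sub_inner_curl_mem_integralKer (v := fun x => φ x • v x) (w := w)
    (by fun_prop) hw hφc.smul_right using 1
  ext x
  rw [curl3_smul (by fun_prop) (by fun_prop)]
  simp only [PiLp.smul_apply, Pi.add_apply, Pi.smul_apply, smul_eq_mul, mul_add,
    Finset.sum_add_distrib, Finset.mul_sum]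
  simp only [mul_assoc, mul_left_comm (φ x)]

lemma mul_advect_vdiv_mem_integralKer (hw : Smooth w) (hφ : Smooth φ)
    (hφc : HasCompactSupport φ) :
    (fun x => φ x * advect w (vdiv w) x + (φ x * vdiv w x ^ 2 + vdiv w x * advect w φ x))
      ∈ integralKer volume := by
  have hc : HasCompactSupport fun x => vdiv w x • φ x • w x :=
    .smul_left (f := vdiv w) (f' := fun x => φ x • w x) hφc.smul_right
  convert advect_add_mul_vdiv_mem_integralKer (v := fun x => φ x • w x) (f := vdiv w)
    (by fun_prop) (by fun_prop) hc using 1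
  ext x
  rw [vdiv_smul (by fun_prop) (by fun_prop)]
  simp only [advect, PiLp.smul_apply, smul_eq_mul, Fin.sum_univ_three]
  ring

lemma mul_gradSq_sub_curlSq_mem_integralKer (hu : Smooth u) (hdiv : ∀ x, vdiv u x = 0)
    (hφ : Smooth φ) (hφc : HasCompactSupport φ) :
    (fun x => φ x * (gradSq u x - curlSq u x)
      - ∑ i, ∑ j, pd i (pd j φ) x * (u x i * u x j)) ∈ integralKer volume := by
  have hdiv' (x : E3) (j : Fin 3) : ∑ i, pd i (pd j fun y => u y i) x = 0 := by
    have : pd j (vdiv u) x = 0 := by simp [show vdiv u = fun _ => 0 from funext hdiv, pd_const]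
    rw [← this]
    unfold vdiv
    simp (disch := fun_prop) only [pd_sum, pd_comm _ j]
  convert sub_mem
    (sum_pd_mem_integralKer (F := fun i x => φ x * ∑ j, u x j * pd j (fun y => u y i) x)
      (by fun_prop) fun i => hφc.mul_right)
    (sum_mem fun j (_ : j ∈ Finset.univ) => sum_pd_mem_integralKer
      (F := fun i x => pd j φ x * (u x i * u x j)) (by fun_prop)
      fun i => (hasCompactSupport_pd hφc j).mul_right) using 1
  ext x
  have div_x := hdiv x
  have hdiv' := hdiv' x
  simp (disch := fun_prop) only [gradSq, curlSq, curl3, vdiv, pd_mul, pd_add, Fin.sum_univ_three,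
    Pi.sub_apply, Pi.add_apply, cons_val] at div_x hdiv' ⊢
  linear_combination (-φ x) * (u x 0 * hdiv' 0 + u x 1 * hdiv' 1 + u x 2 * hdiv' 2)
    + (pd 0 φ x * u x 0 + pd 1 φ x * u x 1 + pd 2 φ x * u x 2) * div_x

end VectorCalculus

section Energy

open scoped Gradient
open Matrix

variable {u w b : E3 → E3} {P φ η : E3 → ℝ}

/-- The terms produced by the derivatives of the test function `φ` in the sum of the three energy
identities. -/
def energyFlux (u w b : E3 → E3) (φ : E3 → ℝ) (x : E3) : ℝ :=
  (‖u x‖ ^ 2 + ‖b x‖ ^ 2 + ‖w x‖ ^ 2) / 2 * (lap φ x + advect u φ x)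
    - inner ℝ (u x) (b x) * advect b φ x + ∑ j, w x j * ((∇ φ x).ofLp ⨯₃ (u x).ofLp) j

lemma IsMMPSolution.momentum (h : IsMMPSolution u w b P) (x : E3) (j : Fin 3) :
    -lap (fun y => u y j) x + advect u (fun y => u y j) x + pd j P x
      = curl3 w x j + advect b (fun y => b y j) x :=
  h.eq_u x j

lemma IsMMPSolution.angular_momentum (h : IsMMPSolution u w b P) (x : E3) (j : Fin 3) :
    -lap (fun y => w y j) x + advect u (fun y => w y j) x
      = pd j (vdiv w) x + curl3 u x j - 2 * w x j :=
  h.eq_w x j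

lemma IsMMPSolution.induction (h : IsMMPSolution u w b P) (x : E3) (j : Fin 3) :
    -lap (fun y => b y j) x + advect u (fun y => b y j) x = advect b (fun y => u y j) x :=
  h.eq_b x j

lemma IsMMPSolution.energy_mem_integralKer (h : IsMMPSolution u w b P) (hφ : Smooth φ)
    (hφc : HasCompactSupport φ) :
    (fun x => φ x * (gradSq u x + gradSq b x + gradSq w x) + φ x * advect u P x
      - (energyFlux u w b φ x - vdiv w x * advect w φ x
        + φ x * (2 * ∑ j, w x j * curl3 u x j - vdiv w x ^ 2 - 2 * ‖w x‖ ^ 2)))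
      ∈ integralKer volume := by
  have energy {v : E3 → E3} (hv : Smooth v) :=
    vector_advection_diffusion_energy_mem_integralKer h.smooth_u h.div_u hv hφ hφc
  have lorentz := mul_inner_advect_add_inner_advect_mem_integralKer h.smooth_b h.div_b h.smooth_u
    h.smooth_b hφ hφc
  have coupling := mul_inner_curl_mem_integralKer h.smooth_u h.smooth_w hφ hφc
  have div_sq := mul_advect_vdiv_mem_integralKer h.smooth_w hφ hφc
  convert sub_mem (add_mem (add_mem lorentz coupling) div_sq)
    (add_mem (add_mem (energy h.smooth_u) (energy h.smooth_b)) (energy h.smooth_w)) using 1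
  ext x
  have test_u : ∑ j, u x j * (-lap (fun y => u y j) x + advect u (fun y => u y j) x)
      + advect u P x = ∑ j, u x j * curl3 w x j + ∑ j, u x j * advect b (fun y => b y j) x := by
    rw [advect.eq_1 u P, ← Finset.sum_add_distrib, ← Finset.sum_add_distrib]
    exact Finset.sum_congr rfl fun j _ => by linear_combination u x j * h.momentum x j
  have test_b : ∑ j, b x j * (-lap (fun y => b y j) x + advect u (fun y => b y j) x)
      = ∑ j, b x j * advect b (fun y => u y j) x := by
    simp only [h.induction]
  have test_w : ∑ j, w x j * (-lap (fun y => w y j) x + advect u (fun y => w y j) x)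
      = advect w (vdiv w) x + ∑ j, w x j * curl3 u x j - 2 * ‖w x‖ ^ 2 := by
    rw [EuclideanSpace.real_norm_sq_eq, advect.eq_1 w, ← Finset.sum_add_distrib, Finset.mul_sum,
      ← Finset.sum_sub_distrib]
    exact Finset.sum_congr rfl fun j _ => by linear_combination w x j * h.angular_momentum x j
  simp only [energyFlux, Pi.sub_apply, Pi.add_apply]
  linear_combination φ x * (test_u + test_b + test_w)

/-- The integrand controlling the local energy when the equations are tested with the solution
times `η ^ 2`, apart from the pressure. -/
def energyRemainder (u w b : E3 → E3) (η : E3 → ℝ) (x : E3) : ℝ :=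
  energyFlux u w b (fun y => η y ^ 2) x + advect w η x ^ 2
    - (∑ i, ∑ j, pd i (pd j fun y => η y ^ 2) x * (u x i * u x j)) / 2

lemma gradSq_nonneg (v : E3 → E3) (x : E3) : 0 ≤ gradSq v x := by
  unfold gradSq
  positivity

lemma advect_sq (hη : Differentiable ℝ η) (v : E3 → E3) (x : E3) :
    advect v (fun y => η y ^ 2) x = 2 * η x * advect v η x := by
  simp only [advect, pd_sq hη, Finset.mul_sum]
  exact Finset.sum_congr rfl fun i _ => by ring

lemma two_mul_inner_curl_sub_le (u w : E3 → E3) (x : E3) :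
    2 * ∑ j, w x j * curl3 u x j - 2 * ‖w x‖ ^ 2 ≤ curlSq u x / 2 := by
  rw [EuclideanSpace.real_norm_sq_eq, curlSq, Finset.mul_sum, Finset.mul_sum,
    ← Finset.sum_sub_distrib, Finset.sum_div]
  exact Finset.sum_le_sum fun j _ => by linarith [sq_nonneg (curl3 u x j - 2 * w x j)]

lemma IsMMPSolution.exists_sq_mul_gradSq_le (h : IsMMPSolution u w b P) (hη : Smooth η)
    (hηc : HasCompactSupport η) :
    ∃ e ∈ integralKer volume, ∀ x, η x ^ 2 * (gradSq u x + gradSq b x + gradSq w x) / 2 ≤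
      e x + energyRemainder u w b η x - η x ^ 2 * advect u P x := by
  have hφ : Smooth fun x => η x ^ 2 := by fun_prop
  have hφc : HasCompactSupport fun x => η x ^ 2 :=
    hηc.comp_left (g := fun t : ℝ => t ^ 2) (by simp)
  refine ⟨_, sub_mem (h.energy_mem_integralKer hφ hφc) ((integralKer _).smul_mem (1 / 2 : ℝ)
    (mul_gradSq_sub_curlSq_mem_integralKer h.smooth_u h.div_u hφ hφc)), fun x => ?_⟩
  have curl_le := mul_le_mul_of_nonneg_left (two_mul_inner_curl_sub_le u w x) (sq_nonneg (η x))
  have div_le := sq_nonneg (η x * vdiv w x + advect w η x)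
  have hb := mul_nonneg (sq_nonneg (η x)) (gradSq_nonneg b x)
  have hw := mul_nonneg (sq_nonneg (η x)) (gradSq_nonneg w x)
  simp only [energyRemainder, advect_sq (differentiable_of_top hη), Pi.sub_apply, Pi.smul_apply,
    smul_eq_mul]
  linarith

end Energy

section PointwiseBounds

open scoped Gradient
open Matrix

variable {u w b : E3 → E3} {f η : E3 → ℝ} {x : E3} {κ M : ℝ}

lemma advect_eq_inner_gradient (v : E3 → E3) (f : E3 → ℝ) (x : E3) :
    advect v f x = inner ℝ (v x) (∇ f x) := by
  simp only [advect, PiLp.inner_apply, gradient_apply_eq_pd, RCLike.inner_apply, conj_trivial,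
    mul_comm]

lemma abs_advect_le (v : E3 → E3) (f : E3 → ℝ) (x : E3) :
    |advect v f x| ≤ ‖v x‖ * ‖∇ f x‖ := by
  rw [advect_eq_inner_gradient]
  exact abs_real_inner_le_norm _ _

lemma abs_sum_mul_cross_le (a b c : E3) :
    |∑ j, a j * (b.ofLp ⨯₃ c.ofLp) j| ≤ ‖a‖ * (‖b‖ * ‖c‖) := by
  have norm_cross : ‖WithLp.toLp 2 (b.ofLp ⨯₃ c.ofLp)‖ ≤ ‖b‖ * ‖c‖ := by
    refine abs_le_of_sq_le_sq' ?_ (by positivity) |>.2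
    have := cross_dot_cross b.ofLp c.ofLp b.ofLp c.ofLp
    simp only [mul_pow, EuclideanSpace.real_norm_sq_eq]
    simp only [dotProduct, Fin.sum_univ_three] at this ⊢
    nlinarith [sq_nonneg (b 0 * c 0 + b 1 * c 1 + b 2 * c 2)]
  calc |∑ j, a j * (b.ofLp ⨯₃ c.ofLp) j| = |inner ℝ a (WithLp.toLp 2 (b.ofLp ⨯₃ c.ofLp))| := by
        simp only [PiLp.inner_apply, RCLike.inner_apply, conj_trivial, mul_comm]
    _ ≤ ‖a‖ * ‖WithLp.toLp 2 (b.ofLp ⨯₃ c.ofLp)‖ := abs_real_inner_le_norm _ _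
    _ ≤ ‖a‖ * (‖b‖ * ‖c‖) := by gcongr

lemma abs_quadratic_le {A : Fin 3 → Fin 3 → ℝ} (hA : ∀ i j, |A i j| ≤ κ) (a : E3) :
    |∑ i, ∑ j, A i j * (a i * a j)| ≤ 3 * κ * ‖a‖ ^ 2 := by
  have entry (i j : Fin 3) : |A i j * (a i * a j)| ≤ κ * ((a i ^ 2 + a j ^ 2) / 2) := by
    rw [abs_mul]
    refine mul_le_mul (hA i j) (abs_le.2 ⟨?_, ?_⟩) (abs_nonneg _) ((abs_nonneg _).trans (hA i j))
    · linarith [sq_nonneg (a i + a j)]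
    · linarith [sq_nonneg (a i - a j)]
  calc |∑ i, ∑ j, A i j * (a i * a j)| ≤ ∑ i, ∑ j, κ * ((a i ^ 2 + a j ^ 2) / 2) :=
        (Finset.abs_sum_le_sum_abs _ _).trans <| Finset.sum_le_sum fun i _ =>
          (Finset.abs_sum_le_sum_abs _ _).trans <| Finset.sum_le_sum fun j _ => entry i j
    _ = 3 * κ * ‖a‖ ^ 2 := by
        simp only [EuclideanSpace.real_norm_sq_eq, Fin.sum_univ_three]
        ring

lemma abs_lap_le (hf : ∀ i j, |pd i (pd j f) x| ≤ κ) : |lap f x| ≤ 3 * κ :=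
  (Finset.abs_sum_le_sum_abs _ _).trans <|
    (Finset.sum_le_sum fun i _ => hf i i).trans (by simp)

lemma energyFlux_le (hu : ‖u x‖ ≤ M) (hb : ‖b x‖ ≤ M) (hgrad : ‖∇ f x‖ ≤ κ)
    (hhess : ∀ i j, |pd i (pd j f) x| ≤ κ) :
    energyFlux u w b f x ≤ (2 + M) * κ * (‖u x‖ ^ 2 + ‖b x‖ ^ 2 + ‖w x‖ ^ 2) := by
  have hκ : 0 ≤ κ := (norm_nonneg _).trans hgrad
  have advect_le {v : E3 → E3} (hv : ‖v x‖ ≤ M) : |advect v f x| ≤ M * κ :=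
    (abs_advect_le v f x).trans (by gcongr; exact (norm_nonneg _).trans hv)
  have transport : (‖u x‖ ^ 2 + ‖b x‖ ^ 2 + ‖w x‖ ^ 2) / 2 * (lap f x + advect u f x)
      ≤ (‖u x‖ ^ 2 + ‖b x‖ ^ 2 + ‖w x‖ ^ 2) / 2 * (3 * κ + M * κ) := by
    gcongr
    · exact (abs_le.1 (abs_lap_le hhess)).2
    · exact (abs_le.1 (advect_le hu)).2
  have lorentz : -(inner ℝ (u x) (b x) * advect b f x)
      ≤ (‖u x‖ ^ 2 + ‖b x‖ ^ 2) / 2 * (M * κ) := by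
    refine (neg_le_abs _).trans ((abs_mul _ _).trans_le ?_)
    gcongr
    · nlinarith [abs_real_inner_le_norm (u x) (b x), sq_nonneg (‖u x‖ - ‖b x‖)]
    · exact advect_le hb
  have coupling : ∑ j, w x j * ((∇ f x).ofLp ⨯₃ (u x).ofLp) j
      ≤ κ * ((‖u x‖ ^ 2 + ‖w x‖ ^ 2) / 2) :=
    calc _ ≤ ‖w x‖ * (‖∇ f x‖ * ‖u x‖) := (le_abs_self _).trans (abs_sum_mul_cross_le _ _ _)
      _ ≤ κ * (‖w x‖ * ‖u x‖) := by rw [mul_left_comm]; gcongr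
      _ ≤ _ := by gcongr; linarith [two_mul_le_add_sq ‖w x‖ ‖u x‖]
  have hM : 0 ≤ M := (norm_nonneg _).trans hu
  unfold energyFlux
  nlinarith [mul_nonneg hκ (sq_nonneg ‖u x‖), mul_nonneg hκ (sq_nonneg ‖b x‖),
    mul_nonneg hκ (sq_nonneg ‖w x‖), mul_nonneg (mul_nonneg hM hκ) (sq_nonneg ‖w x‖)]

lemma energyRemainder_le (hu : ‖u x‖ ≤ M) (hb : ‖b x‖ ≤ M) (hη : ‖∇ η x‖ ^ 2 ≤ κ)
    (hgrad : ‖∇ (fun y => η y ^ 2) x‖ ≤ κ)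
    (hhess : ∀ i j, |pd i (pd j fun y => η y ^ 2) x| ≤ κ) :
    energyRemainder u w b η x ≤ (4 + M) * κ * (‖u x‖ ^ 2 + ‖b x‖ ^ 2 + ‖w x‖ ^ 2) := by
  have hκ : 0 ≤ κ := (norm_nonneg _).trans hgrad
  have flux := energyFlux_le (w := w) hu hb hgrad hhess
  have quad := (abs_le.1 (abs_quadratic_le hhess (u x))).1
  have sq_le : advect w η x ^ 2 ≤ κ * ‖w x‖ ^ 2 := by
    calc advect w η x ^ 2 = |advect w η x| ^ 2 := (sq_abs _).symm
      _ ≤ (‖w x‖ * ‖∇ η x‖) ^ 2 := by gcongr; exact abs_advect_le w η x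
      _ = ‖∇ η x‖ ^ 2 * ‖w x‖ ^ 2 := by ring
      _ ≤ κ * ‖w x‖ ^ 2 := by gcongr
  unfold energyRemainder
  nlinarith [mul_nonneg hκ (sq_nonneg ‖u x‖), mul_nonneg hκ (sq_nonneg ‖b x‖),
    mul_nonneg hκ (sq_nonneg ‖w x‖)]

lemma energyRemainder_eq_zero_of_notMem_tsupport (hx : x ∉ tsupport η) :
    energyRemainder u w b η x = 0 := by
  have hx_sq : x ∉ tsupport fun y => η y ^ 2 := fun h => hx (tsupport_fun_sq_subset η h)
  have zero_of_subset {F : Type} [Zero F] {f : E3 → F}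
      (hf : tsupport f ⊆ tsupport fun y => η y ^ 2) : f x = 0 :=
    image_eq_zero_of_notMem_tsupport fun h => hx_sq (hf h)
  simp [energyRemainder, energyFlux, advect_eq_zero_of_notMem_tsupport hx,
    advect_eq_zero_of_notMem_tsupport hx_sq, zero_of_subset (tsupport_lap_subset _),
    zero_of_subset (tsupport_gradient_subset _),
    zero_of_subset ((tsupport_pd_subset _ _).trans (tsupport_pd_subset _ _))]

end PointwiseBounds

section Pressure

open scoped Gradient

variable {u w b v Z : E3 → E3} {P E : E3 → ℝ}

lemma advect_sub_left (v w : E3 → E3) (f : E3 → ℝ) (x : E3) :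
    advect (fun y => v y - w y) f x = advect v f x - advect w f x := by
  simp only [advect, PiLp.sub_apply, sub_mul, Finset.sum_sub_distrib]

lemma vdiv_sub (hv : Differentiable ℝ v) (hw : Differentiable ℝ w) (x : E3) :
    vdiv (fun y => v y - w y) x = vdiv v x - vdiv w x := by
  simp (disch := fun_prop) only [vdiv, PiLp.sub_apply, pd_sub, Finset.sum_sub_distrib]

/-- The pairing of the momentum equation, apart from its pressure, with the test field `Z`, after
moving all derivatives to `Z`. -/
def momentumPairing (u w b Z : E3 → E3) (x : E3) : ℝ :=
  ∑ j, (w x j * curl3 Z x j + u x j * lap (fun y => Z y j) x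
    + u x j * advect u (fun y => Z y j) x - b x j * advect b (fun y => Z y j) x)

lemma IsMMPSolution.advect_pressure_mem_integralKer (h : IsMMPSolution u w b P) (hv : Smooth v)
    (hvc : HasCompactSupport v) (hZ : Smooth Z) (hZc : HasCompactSupport Z)
    (hdiv : ∀ x, vdiv Z x = vdiv v x) :
    (fun x => advect v P x - momentumPairing u w b Z x) ∈ integralKer volume := by
  have hc := hasCompactSupport_apply hZc
  have pressure : (advect (fun x => v x - Z x) P) ∈ integralKer volume :=
    advect_mem_integralKer (by fun_prop) (fun x => by
      rw [vdiv_sub (by fun_prop) (by fun_prop), hdiv, sub_self]) h.smooth_P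
      (.smul_left (f := P) (f' := fun x => v x - Z x) (hvc.sub hZc))
  have curl := inner_curl_sub_inner_curl_mem_integralKer hZ h.smooth_w hZc
  have viscous := sum_mem fun j (_ : j ∈ Finset.univ) =>
    mul_lap_sub_mul_lap_mem_integralKer (f := fun x => u x j) (g := fun x => Z x j)
      (by have := h.smooth_u; fun_prop) (by fun_prop) (hc j)
  have transport := inner_advect_add_inner_advect_mem_integralKer h.smooth_u h.div_u hZ
    h.smooth_u hZc
  have lorentz := inner_advect_add_inner_advect_mem_integralKer h.smooth_b h.div_b hZ
    h.smooth_b hZc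
  convert sub_mem (add_mem (add_mem pressure curl) lorentz) (add_mem transport viscous) using 1
  ext x
  have momentum := h.momentum x
  simp only [Pi.add_apply, Pi.sub_apply, Finset.sum_apply, advect_sub_left, momentumPairing]
  simp only [advect.eq_1 Z, Fin.sum_univ_three] at momentum ⊢
  linear_combination Z x 0 * momentum 0 + Z x 1 * momentum 1 + Z x 2 * momentum 2

lemma momentumPairing_eq_zero_of_notMem_tsupport {x : E3} (hx : x ∉ tsupport Z) :
    momentumPairing u w b Z x = 0 := by
  have pd_eq_zero (i j : Fin 3) : pd i (fun y => Z y j) x = 0 :=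
    image_eq_zero_of_notMem_tsupport fun hx' =>
      hx (tsupport_apply_subset Z j (tsupport_pd_subset _ i hx'))
  have lap_eq_zero (j : Fin 3) : lap (fun y => Z y j) x = 0 :=
    image_eq_zero_of_notMem_tsupport fun hx' =>
      hx (tsupport_apply_subset Z j (tsupport_lap_subset _ hx'))
  have curl_eq_zero (j : Fin 3) : curl3 Z x j = 0 := by
    fin_cases j <;> simp [curl3, pd_eq_zero]
  simp [momentumPairing, advect, curl_eq_zero, lap_eq_zero, pd_eq_zero]

lemma curlSq_le (Z : E3 → E3) (x : E3) : curlSq Z x ≤ 2 * gradSq Z x := by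
  simp only [curlSq, curl3, gradSq, Fin.sum_univ_three, Matrix.cons_val]
  nlinarith [sq_nonneg (pd 1 (fun y => Z y 2) x + pd 2 (fun y => Z y 1) x),
    sq_nonneg (pd 2 (fun y => Z y 0) x + pd 0 (fun y => Z y 2) x),
    sq_nonneg (pd 0 (fun y => Z y 1) x + pd 1 (fun y => Z y 0) x),
    sq_nonneg (pd 0 (fun y => Z y 0) x), sq_nonneg (pd 1 (fun y => Z y 1) x),
    sq_nonneg (pd 2 (fun y => Z y 2) x)]

lemma abs_sum_mul_le {ι : Type*} (s : Finset ι) (a c : ι → ℝ) {t : ℝ} (ht : 0 < t) :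
    |∑ i ∈ s, a i * c i| ≤ (∑ i ∈ s, a i ^ 2) / (2 * t) + t / 2 * ∑ i ∈ s, c i ^ 2 := by
  rw [Finset.sum_div, Finset.mul_sum, ← Finset.sum_add_distrib]
  refine (Finset.abs_sum_le_sum_abs _ _).trans (Finset.sum_le_sum fun i _ => ?_)
  have young : t * (|a i| / t * |c i|) ≤ t * (((|a i| / t) ^ 2 + |c i| ^ 2) / 2) := by
    gcongr
    linarith [two_mul_le_add_sq (|a i| / t) |c i|]
  rw [abs_mul]
  calc |a i| * |c i| = t * (|a i| / t * |c i|) := by field_simp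
    _ ≤ t * (((|a i| / t) ^ 2 + |c i| ^ 2) / 2) := young
    _ = a i ^ 2 / (2 * t) + t / 2 * c i ^ 2 := by simp only [div_pow, sq_abs]; field_simp

lemma abs_sum_mul_advect_le {M t : ℝ} (ht : 0 < t) {x : E3} (hv : ‖v x‖ ≤ M) :
    |∑ j, v x j * advect v (fun y => Z y j) x|
      ≤ M ^ 2 * ‖v x‖ ^ 2 / (2 * t) + t / 2 * gradSq Z x := by
  have young := abs_sum_mul_le Finset.univ (fun k : Fin 3 × Fin 3 => v x k.1 * v x k.2)
    (fun k => pd k.2 (fun y => Z y k.1) x) ht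
  have sq_le : ∑ k : Fin 3 × Fin 3, (v x k.1 * v x k.2) ^ 2 ≤ M ^ 2 * ‖v x‖ ^ 2 :=
    calc ∑ k : Fin 3 × Fin 3, (v x k.1 * v x k.2) ^ 2 = ‖v x‖ ^ 2 * ‖v x‖ ^ 2 := by
          simp only [mul_pow, EuclideanSpace.real_norm_sq_eq, Finset.sum_mul_sum,
            Fintype.sum_prod_type]
      _ ≤ M ^ 2 * ‖v x‖ ^ 2 := by gcongr
  simp only [Fintype.sum_prod_type] at young sq_le
  calc |∑ j, v x j * advect v (fun y => Z y j) x|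
      = |∑ j, ∑ i, v x j * v x i * pd i (fun y => Z y j) x| := by
        simp only [advect, Finset.mul_sum, mul_assoc]
    _ ≤ _ := young
    _ ≤ _ := by unfold gradSq; gcongr

/-- The squared norm of `ΔZ + ∇E`, the Laplacian of `Z` up to a gradient. -/
def lapAddGradSq (Z : E3 → E3) (E : E3 → ℝ) (x : E3) : ℝ :=
  ∑ j, (lap (fun y => Z y j) x + pd j E x) ^ 2

lemma neg_momentumPairing_le {M t : ℝ} (ht : 0 < t) {x : E3} (hu : ‖u x‖ ≤ M) (hb : ‖b x‖ ≤ M) :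
    -(momentumPairing u w b Z x + advect u E x)
      ≤ (1 + M ^ 2) / (2 * t) * (‖u x‖ ^ 2 + ‖b x‖ ^ 2 + ‖w x‖ ^ 2)
        + 2 * t * (gradSq Z x + lapAddGradSq Z E x) := by
  have curl := (abs_le.1 (abs_sum_mul_le Finset.univ (w x) (curl3 Z x) ht)).1
  have viscous := (abs_le.1 (abs_sum_mul_le Finset.univ (u x)
    (fun j => lap (fun y => Z y j) x + pd j E x) ht)).1
  have transport := (abs_le.1 (abs_sum_mul_advect_le (Z := Z) ht hu)).1
  have lorentz := (abs_le.1 (abs_sum_mul_advect_le (Z := Z) ht hb)).2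
  rw [← EuclideanSpace.real_norm_sq_eq] at curl viscous
  have curl_le := mul_le_mul_of_nonneg_left (curlSq_le Z x) ht.le
  have lap_nonneg : 0 ≤ t * lapAddGradSq Z E x := by unfold lapAddGradSq; positivity
  have norms : 0 ≤ (‖b x‖ ^ 2 + M ^ 2 * ‖w x‖ ^ 2) / (2 * t) := by positivity
  have split : momentumPairing u w b Z x + advect u E x = ∑ j, w x j * curl3 Z x j
      + ∑ j, u x j * (lap (fun y => Z y j) x + pd j E x)
      + ∑ j, u x j * advect u (fun y => Z y j) x - ∑ j, b x j * advect b (fun y => Z y j) x := by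
    simp only [momentumPairing, advect.eq_1 u E, Fin.sum_univ_three]
    ring
  have expand : (1 + M ^ 2) / (2 * t) * (‖u x‖ ^ 2 + ‖b x‖ ^ 2 + ‖w x‖ ^ 2)
      = ‖w x‖ ^ 2 / (2 * t) + ‖u x‖ ^ 2 / (2 * t) + M ^ 2 * ‖u x‖ ^ 2 / (2 * t)
        + M ^ 2 * ‖b x‖ ^ 2 / (2 * t) + (‖b x‖ ^ 2 + M ^ 2 * ‖w x‖ ^ 2) / (2 * t) := by
    ring
  rw [split, expand]
  simp only [lapAddGradSq, curlSq] at curl_le lap_nonneg ⊢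
  linarith

lemma IsMMPSolution.exists_neg_advect_pressure_le (h : IsMMPSolution u w b P) {M t : ℝ}
    (hu : ∀ x, ‖u x‖ ≤ M) (hb : ∀ x, ‖b x‖ ≤ M) (ht : 0 < t) (hv : Smooth v)
    (hvc : HasCompactSupport v) (hZ : Smooth Z) (hZc : HasCompactSupport Z) (hE : Smooth E)
    (hEc : HasCompactSupport E) (hdiv : ∀ x, vdiv Z x = vdiv v x) {s : Set E3}
    (hZs : tsupport Z ⊆ s) (hEs : tsupport E ⊆ s) :
    ∃ e ∈ integralKer volume, ∀ x, -advect v P x ≤ e x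
      + (1 + M ^ 2) / (2 * t) * s.indicator (fun y => ‖u y‖ ^ 2 + ‖b y‖ ^ 2 + ‖w y‖ ^ 2) x
      + 2 * t * (gradSq Z x + lapAddGradSq Z E x) := by
  have advect_E : advect u E ∈ integralKer volume :=
    advect_mem_integralKer h.smooth_u h.div_u hE hEc.smul_right
  refine ⟨_, sub_mem advect_E (h.advect_pressure_mem_integralKer hv hvc hZ hZc hdiv),
    fun x => ?_⟩
  rw [Pi.sub_apply]
  by_cases hx : x ∈ s
  · have := neg_momentumPairing_le (w := w) (Z := Z) (E := E) ht (hu x) (hb x)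
    rw [Set.indicator_of_mem hx]
    linarith
  · have : 0 ≤ 2 * t * (gradSq Z x + lapAddGradSq Z E x) :=
      mul_nonneg (by positivity) (add_nonneg (gradSq_nonneg Z x)
        (Finset.sum_nonneg fun j _ => sq_nonneg _))
    rw [Set.indicator_of_notMem hx, advect_eq_zero_of_notMem_tsupport fun h => hx (hEs h),
      momentumPairing_eq_zero_of_notMem_tsupport fun h => hx (hZs h)]
    linarith

end Pressure

section RapidDecay

/-- The property of being the underlying function of a real-valued Schwartz function. Unlike the
bundled Schwartz space it is stable under the coordinate derivatives `pd`. -/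
@[fun_prop]
def IsSchwartz {E : Type*} [NormedAddCommGroup E] [NormedSpace ℝ E] (f : E → ℝ) : Prop :=
  ∃ F : SchwartzMap E ℝ, F = f

variable {E : Type*} [NormedAddCommGroup E] [NormedSpace ℝ E] {f g : E → ℝ}

@[fun_prop]
lemma IsSchwartz.contDiff (hf : IsSchwartz f) : Smooth f := by
  obtain ⟨F, rfl⟩ := hf
  exact F.smooth ⊤

@[fun_prop]
lemma IsSchwartz.add (hf : IsSchwartz f) (hg : IsSchwartz g) : IsSchwartz fun x => f x + g x := by
  obtain ⟨F, rfl⟩ := hf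
  obtain ⟨G, rfl⟩ := hg
  exact ⟨F + G, rfl⟩

@[fun_prop]
lemma IsSchwartz.sub (hf : IsSchwartz f) (hg : IsSchwartz g) : IsSchwartz fun x => f x - g x := by
  obtain ⟨F, rfl⟩ := hf
  obtain ⟨G, rfl⟩ := hg
  exact ⟨F - G, rfl⟩

@[fun_prop]
lemma IsSchwartz.const_mul (hf : IsSchwartz f) (c : ℝ) : IsSchwartz fun x => c * f x := by
  obtain ⟨F, rfl⟩ := hf
  exact ⟨c • F, rfl⟩

@[fun_prop]
lemma IsSchwartz.mul (hf : IsSchwartz f) (hg : IsSchwartz g) : IsSchwartz fun x => f x * g x := by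
  obtain ⟨F, rfl⟩ := hf
  obtain ⟨G, rfl⟩ := hg
  exact ⟨SchwartzMap.pairing (ContinuousLinearMap.mul ℝ ℝ) F G, rfl⟩

@[fun_prop]
lemma IsSchwartz.sq (hf : IsSchwartz f) : IsSchwartz fun x => f x ^ 2 := by
  simpa only [_root_.sq] using hf.mul hf

@[fun_prop]
lemma IsSchwartz.sum {ι : Type*} {s : Finset ι} {F : ι → E → ℝ} (hF : ∀ k, IsSchwartz (F k)) :
    IsSchwartz fun x => ∑ k ∈ s, F k x := by
  choose G hG using hF
  exact ⟨∑ k ∈ s, G k, by ext x; simp [hG]⟩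

lemma IsSchwartz.integrable [MeasurableSpace E] [BorelSpace E] [SecondCountableTopology E]
    {μ : Measure E} [μ.HasTemperateGrowth] (hf : IsSchwartz f) : Integrable f μ := by
  obtain ⟨F, rfl⟩ := hf
  exact F.integrable

lemma isSchwartz_of_hasCompactSupport (hf : Smooth f) (hfc : HasCompactSupport f) :
    IsSchwartz f :=
  ⟨hfc.toSchwartzMap hf, rfl⟩

end RapidDecay

section Resolvent

open scoped SchwartzMap Laplacian LineDeriv

variable {f q : E3 → ℝ}

@[fun_prop]
lemma isSchwartz_pd (hf : IsSchwartz f) (i : Fin 3) : IsSchwartz (pd i f) := by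
  obtain ⟨F, rfl⟩ := hf
  exact ⟨∂_{EuclideanSpace.single i 1} F,
    funext fun _ => SchwartzMap.lineDerivOp_apply_eq_fderiv ..⟩

@[fun_prop]
lemma isSchwartz_lap (hf : IsSchwartz f) : IsSchwartz (lap f) := by
  unfold lap
  fun_prop

lemma IsSchwartz.pd_mem_integralKer (hf : IsSchwartz f) (i : Fin 3) :
    pd i f ∈ integralKer volume :=
  pd_mem_integralKer_of_integrable (differentiable_of_top hf.contDiff) hf.integrable
    (isSchwartz_pd hf i).integrable

lemma IsSchwartz.resolvent_energy_mem_integralKer (hq : IsSchwartz q) (c : ℝ) :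
    (fun x => (c * q x - lap q x) ^ 2 - (c ^ 2 * q x ^ 2 + 2 * c * ∑ i, pd i q x ^ 2
      + ∑ i, ∑ j, pd i (pd j q) x ^ 2)) ∈ integralKer volume := by
  have hq' := hq.contDiff
  have flux (i : Fin 3) : IsSchwartz fun x => ∑ j, (pd i q x * pd j (pd j q) x
      - pd j q x * pd i (pd j q) x) - (2 * c) * (q x * pd i q x) := by
    fun_prop
  convert sum_mem fun i (_ : i ∈ Finset.univ) => (flux i).pd_mem_integralKer i using 1
  ext x
  have comm (i j : Fin 3) : pd i (pd j q) = pd j (pd i q) := pd_comm (by fun_prop) i j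
  have comm' (i j k : Fin 3) : pd i (pd j (pd k q)) = pd j (pd i (pd k q)) :=
    pd_comm (by fun_prop) i j
  simp (disch := fun_prop) only [lap, pd_sub, pd_add, pd_const_mul, pd_mul, Fin.sum_univ_three,
    Finset.sum_apply]
  simp only [comm 1 0, comm 2 0, comm 2 1, comm' 1 0, comm' 2 0, comm' 2 1]
  ring

lemma lap_eq_laplacian (hf : ContDiff ℝ 2 f) : lap f = Δ f := by
  ext x
  rw [InnerProductSpace.laplacian_eq_iteratedFDeriv_orthonormalBasis f
    (EuclideanSpace.basisFun (Fin 3) ℝ)]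
  exact Finset.sum_congr rfl fun i _ =>
    (pd_pd_apply hf i i x).trans (by simp [iteratedFDeriv_two_apply])

lemma exists_schwartz_sub_laplacian_eq {E : Type*} [NormedAddCommGroup E]
    [InnerProductSpace ℝ E] [FiniteDimensional ℝ E] [MeasurableSpace E] [BorelSpace E]
    (H : 𝓢(E, ℂ)) : ∃ Q : 𝓢(E, ℂ), Q - ((2 * π) ^ 2)⁻¹ • Δ Q = H := by
  have norm_growth : (fun x : E => ‖x‖ ^ 2).HasTemperateGrowth := by fun_prop
  have symbol_growth : (fun x : E => (1 + ‖x‖ ^ 2) ^ (-1 : ℝ)).HasTemperateGrowth := by fun_prop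
  have symbol_add : (fun x : E => (1 + ‖x‖ ^ 2) ^ (-1 : ℝ))
      + (fun x => ‖x‖ ^ 2) * (fun x => (1 + ‖x‖ ^ 2) ^ (-1 : ℝ)) = fun _ => 1 := by
    ext x
    simp only [Pi.add_apply, Pi.mul_apply, rpow_neg_one]
    field_simp
  refine ⟨SchwartzMap.fourierMultiplierCLM ℂ (fun x => (1 + ‖x‖ ^ 2) ^ (-1 : ℝ)) H, ?_⟩
  rw [SchwartzMap.laplacian_eq_fourierMultiplierCLM,
    SchwartzMap.fourierMultiplierCLM_fourierMultiplierCLM_apply norm_growth symbol_growth,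
    smul_smul, mul_neg, inv_mul_cancel₀ (by positivity), neg_one_smul, sub_neg_eq_add,
    SchwartzMap.fourierMultiplierCLM_apply, SchwartzMap.fourierMultiplierCLM_apply,
    ← FourierTransform.fourierInv_add, ← add_apply,
    ← SchwartzMap.smulLeftCLM_add symbol_growth (norm_growth.mul symbol_growth), symbol_add]
  simp

lemma IsSchwartz.exists_resolvent (hf : IsSchwartz f) :
    ∃ q : E3 → ℝ, IsSchwartz q ∧ ∀ x, (2 * π) ^ 2 * q x - lap q x = f x := by
  obtain ⟨F, rfl⟩ := hf
  obtain ⟨Q, hQ⟩ := exists_schwartz_sub_laplacian_eq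
    (((2 * π) ^ 2)⁻¹ • F.postcompCLM Complex.ofRealCLM)
  refine ⟨_, ⟨Q.postcompCLM Complex.reCLM, rfl⟩, fun x => ?_⟩
  have lap_re : lap (Q.postcompCLM Complex.reCLM) x = (Δ Q x).re := by
    rw [lap_eq_laplacian (SchwartzMap.smooth _ 2), SchwartzMap.laplacian_apply]
    exact (Q.smooth 2).contDiffAt.laplacian_CLM_comp_left (l := Complex.reCLM)
  have re_eq : (Q x).re - ((2 * π) ^ 2)⁻¹ * (Δ Q x).re = ((2 * π) ^ 2)⁻¹ * F x := by
    have := congrArg Complex.re (DFunLike.congr_fun hQ x)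
    simpa only [sub_apply, smul_apply, Complex.sub_re, Complex.smul_re, smul_eq_mul,
      SchwartzMap.postcompCLM_apply, Complex.ofRealCLM_apply, Complex.ofReal_re] using this
  rw [lap_re]
  change (2 * π) ^ 2 * (Q x).re - _ = _
  field_simp at re_eq
  linarith

end Resolvent

section Jet

open Asymptotics

variable {χ f g q : E3 → ℝ}

lemma lap_mul (hf : Smooth f) (hg : Smooth g) : lap (fun y => f y * g y)
    = fun x => f x * lap g x + 2 * ∑ i, pd i f x * pd i g x + lap f x * g x := by
  ext x
  simp (disch := fun_prop) only [lap, pd_mul, pd_add, Fin.sum_univ_three]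
  ring

lemma lap_add (hf : Smooth f) (hg : Smooth g) :
    lap (fun y => f y + g y) = fun x => lap f x + lap g x := by
  ext x
  simp (disch := fun_prop) only [lap, pd_add, Finset.sum_add_distrib]

lemma lap_sub (hf : Smooth f) (hg : Smooth g) :
    lap (fun y => f y - g y) = fun x => lap f x - lap g x := by
  ext x
  simp (disch := fun_prop) only [lap, pd_sub, Finset.sum_sub_distrib]

lemma lap_const_mul (hf : Smooth f) (c : ℝ) : lap (fun y => c * f y) = fun x => c * lap f x := by
  ext x
  simp (disch := fun_prop) only [lap, pd_const_mul, Finset.mul_sum]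

lemma lap_sum {ι : Type*} {s : Finset ι} {F : ι → E3 → ℝ} (hF : ∀ k, Smooth (F k)) :
    lap (fun y => ∑ k ∈ s, F k y) = fun x => ∑ k ∈ s, lap (F k) x := by
  ext x
  change ∑ i, pd i (pd i fun y => ∑ k ∈ s, F k y) x = ∑ k ∈ s, ∑ i, pd i (pd i (F k)) x
  rw [Finset.sum_comm]
  refine Finset.sum_congr rfl fun i _ => ?_
  rw [pd_sum fun k => by fun_prop, pd_sum fun k => by fun_prop]

/-- The squared Euclidean norm of the second-order jet of a function. -/
def jetSq (q : E3 → ℝ) (x : E3) : ℝ :=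
  q x ^ 2 + ∑ i, pd i q x ^ 2 + ∑ i, ∑ j, pd i (pd j q) x ^ 2

lemma jetSq_nonneg (q : E3 → ℝ) (x : E3) : 0 ≤ jetSq q x := by
  unfold jetSq
  positivity

lemma IsSchwartz.integrable_jetSq (hq : IsSchwartz q) : Integrable (jetSq q) := by
  refine IsSchwartz.integrable ?_
  unfold jetSq
  fun_prop

lemma IsSchwartz.integral_jetSq_le (hq : IsSchwartz q) {c : ℝ} (hc : 1 ≤ c) :
    ∫ x, jetSq q x ≤ ∫ x, (c * q x - lap q x) ^ 2 := by
  refine integral_le_of_le_add_mem_integralKer (jetSq_nonneg q)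
    (neg_mem (hq.resolvent_energy_mem_integralKer c)) (IsSchwartz.integrable (by fun_prop))
    fun x => ?_
  have jetSq_le : jetSq q x ≤ c ^ 2 * q x ^ 2 + 2 * c * ∑ i, pd i q x ^ 2
      + ∑ i, ∑ j, pd i (pd j q) x ^ 2 := by
    have : 0 ≤ ∑ i, pd i q x ^ 2 := by positivity
    unfold jetSq
    gcongr
    · exact le_mul_of_one_le_left (sq_nonneg _) (one_le_pow₀ hc)
    · exact le_mul_of_one_le_left this (by linarith)
  rw [Pi.neg_apply]
  linarith

/-- A scalar quantity depending on a function and a point that is bounded, uniformly in both, by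
the second-order jet of the function at the point. -/
def IsJetBounded (T : (E3 → ℝ) → E3 → ℝ) : Prop :=
  (fun a : (E3 → ℝ) × E3 => T a.1 a.2) =O[⊤] fun a => √(jetSq a.1 a.2)

namespace IsJetBounded

variable {S T : (E3 → ℝ) → E3 → ℝ}

lemma add (hS : IsJetBounded S) (hT : IsJetBounded T) :
    IsJetBounded fun q x => S q x + T q x :=
  IsBigO.add hS hT

lemma const_mul (hT : IsJetBounded T) (c : ℝ) : IsJetBounded fun q x => c * T q x :=
  IsBigO.const_mul_left hT c

lemma sum {ι : Type*} {s : Finset ι} {T : ι → (E3 → ℝ) → E3 → ℝ} (hT : ∀ k, IsJetBounded (T k)) :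
    IsJetBounded fun q x => ∑ k ∈ s, T k q x :=
  IsBigO.fun_sum fun k _ => hT k

lemma schwartz_mul (hχ : IsSchwartz χ) (hT : IsJetBounded T) :
    IsJetBounded fun q x => χ x * T q x := by
  obtain ⟨F, rfl⟩ := hχ
  have coeff : (fun a : (E3 → ℝ) × E3 => F a.2) =O[⊤] fun _ => (1 : ℝ) :=
    isBigO_top.2 ⟨_, fun a => by simpa using F.toBoundedContinuousFunction.norm_coe_le_norm a.2⟩
  simpa only [IsJetBounded, one_mul] using coeff.mul hT

lemma of_sq_le (h : ∀ q x, T q x ^ 2 ≤ jetSq q x) : IsJetBounded T :=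
  isBigO_top.2 ⟨1, fun a => by
    rw [one_mul, norm_of_nonneg (sqrt_nonneg _)]
    exact abs_le_sqrt (h a.1 a.2)⟩

lemma exists_sq_le (hT : IsJetBounded T) : ∃ C, 0 ≤ C ∧ ∀ q x, T q x ^ 2 ≤ C * jetSq q x := by
  obtain ⟨C, hC⟩ := isBigO_top.1 hT
  refine ⟨C ^ 2, sq_nonneg C, fun q x => ?_⟩
  rw [← sq_abs, ← sq_sqrt (jetSq_nonneg q x), ← mul_pow]
  have := hC (q, x)
  rw [norm_of_nonneg (sqrt_nonneg _), Real.norm_eq_abs] at this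
  exact pow_le_pow_left₀ (abs_nonneg _) this 2

end IsJetBounded

lemma isJetBounded_self : IsJetBounded fun q x => q x :=
  .of_sq_le fun q x => by
    have : 0 ≤ ∑ i, pd i q x ^ 2 + ∑ i, ∑ j, pd i (pd j q) x ^ 2 := by positivity
    unfold jetSq
    linarith

lemma isJetBounded_pd (i : Fin 3) : IsJetBounded fun q => pd i q :=
  .of_sq_le fun q x => by
    have := Finset.single_le_sum (fun i _ => sq_nonneg (pd i q x)) (Finset.mem_univ i)
    have : 0 ≤ q x ^ 2 + ∑ i, ∑ j, pd i (pd j q) x ^ 2 := by positivity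
    unfold jetSq
    linarith

lemma isJetBounded_pd_pd (i j : Fin 3) : IsJetBounded fun q => pd i (pd j q) :=
  .of_sq_le fun q x => by
    have := Finset.single_le_sum (fun j _ => sq_nonneg (pd i (pd j q) x)) (Finset.mem_univ j)
    have := Finset.single_le_sum (f := fun i => ∑ j, pd i (pd j q) x ^ 2)
      (fun i _ => by positivity) (Finset.mem_univ i)
    have : 0 ≤ q x ^ 2 + ∑ i, pd i q x ^ 2 := by positivity
    unfold jetSq
    linarith

lemma isJetBounded_lap : IsJetBounded fun q => lap q :=
  .sum fun i => isJetBounded_pd_pd i i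

end Jet

section Corrector

variable {χ g q : E3 → ℝ} {c : ℝ}

/-- The function `Δ(χ q) + (c - Δ) q` for a cutoff `χ` that equals `1` near the support of
`(c - Δ) q`, written without second derivatives of `q`. -/
def cutoffRemainder (c : ℝ) (χ q : E3 → ℝ) (x : E3) : ℝ :=
  c * (χ x * q x) + (2 * ∑ k, pd k χ x * pd k q x + lap χ x * q x)

lemma pd_mul_pd_eq_zero (h : ∀ x, χ =ᶠ[𝓝 x] 1 ∨ g =ᶠ[𝓝 x] 0) (i j : Fin 3) (x : E3) :
    pd i χ x * pd j g x = 0 := by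
  obtain h | h := h x
  · simp [pd, h.fderiv_eq]
  · simp [pd, h.fderiv_eq]

lemma lap_mul_add_eq_cutoffRemainder (hχ : Smooth χ) (hq : Smooth q)
    (hqg : ∀ x, c * q x - lap q x = g x) (h : ∀ x, χ =ᶠ[𝓝 x] 1 ∨ g =ᶠ[𝓝 x] 0) :
    (fun y => lap (fun z => χ z * q z) y + g y) = cutoffRemainder c χ q := by
  ext x
  have hχg : χ x * g x = g x := by
    obtain h | h := h x <;> simp [h.eq_of_nhds]
  rw [lap_mul hχ hq, cutoffRemainder]
  linear_combination -χ x * hqg x - hχg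

lemma pd_cutoffRemainder (hχ : Smooth χ) (hq : Smooth q) (i : Fin 3) :
    pd i (cutoffRemainder c χ q) = fun x => c * (χ x * pd i q x + pd i χ x * q x)
      + (2 * ∑ k, (pd k χ x * pd i (pd k q) x + pd i (pd k χ) x * pd k q x)
        + (lap χ x * pd i q x + pd i (lap χ) x * q x)) := by
  unfold cutoffRemainder
  simp (disch := fun_prop) only [pd_mul, pd_add, pd_const, Fin.sum_univ_three,
    Pi.zero_apply, zero_mul, add_zero]

lemma lap_cutoffRemainder (hχ : Smooth χ) (hq : Smooth q)
    (hqg : ∀ x, c * q x - lap q x = g x) (h : ∀ x, χ =ᶠ[𝓝 x] 1 ∨ g =ᶠ[𝓝 x] 0) :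
    lap (cutoffRemainder c χ q) = fun x =>
      c * (χ x * lap q x + 2 * ∑ i, pd i χ x * pd i q x + lap χ x * q x)
      + (2 * ∑ k, (c * (pd k χ x * pd k q x) + 2 * ∑ i, pd i (pd k χ) x * pd i (pd k q) x
          + lap (pd k χ) x * pd k q x)
        + (lap χ x * lap q x + 2 * ∑ i, pd i (lap χ) x * pd i q x + lap (lap χ) x * q x)) := by
  have mul_lap_pd (k : Fin 3) (x : E3) :
      pd k χ x * lap (pd k q) x = c * (pd k χ x * pd k q x) := by
    have pd_g : pd k g x = c * pd k q x - lap (pd k q) x := by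
      rw [← funext hqg, pd_sub (by fun_prop) (by fun_prop), pd_const_mul (by fun_prop), pd_lap hq]
    linear_combination pd k χ x * pd_g - pd_mul_pd_eq_zero h k k x
  unfold cutoffRemainder
  simp (disch := fun_prop) only [lap_add, lap_const_mul, lap_sum, lap_mul, mul_lap_pd]

lemma isJetBounded_pd_cutoffRemainder (c : ℝ) (hχ : IsSchwartz χ) (i : Fin 3) :
    IsJetBounded fun q x => c * (χ x * pd i q x + pd i χ x * q x)
      + (2 * ∑ k, (pd k χ x * pd i (pd k q) x + pd i (pd k χ) x * pd k q x)
        + (lap χ x * pd i q x + pd i (lap χ) x * q x)) :=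
  have leibniz {f : E3 → ℝ} (hf : IsSchwartz f) : IsJetBounded fun q x =>
      f x * pd i q x + pd i f x * q x :=
    ((isJetBounded_pd i).schwartz_mul hf).add (isJetBounded_self.schwartz_mul (by fun_prop))
  have leibniz_pd (k : Fin 3) : IsJetBounded fun q x =>
      pd k χ x * pd i (pd k q) x + pd i (pd k χ) x * pd k q x :=
    ((isJetBounded_pd_pd i k).schwartz_mul (by fun_prop)).add
      ((isJetBounded_pd k).schwartz_mul (by fun_prop))
  ((leibniz hχ).const_mul c).add (((IsJetBounded.sum leibniz_pd).const_mul 2).add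
    (leibniz (by fun_prop)))

lemma isJetBounded_lap_cutoffRemainder (c : ℝ) (hχ : IsSchwartz χ) :
    IsJetBounded fun q x => c * (χ x * lap q x + 2 * ∑ i, pd i χ x * pd i q x + lap χ x * q x)
      + (2 * ∑ k, (c * (pd k χ x * pd k q x) + 2 * ∑ i, pd i (pd k χ) x * pd i (pd k q) x
          + lap (pd k χ) x * pd k q x)
        + (lap χ x * lap q x + 2 * ∑ i, pd i (lap χ) x * pd i q x + lap (lap χ) x * q x)) :=
  have leibniz {f : E3 → ℝ} (hf : IsSchwartz f) : IsJetBounded fun q x =>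
      f x * lap q x + 2 * ∑ i, pd i f x * pd i q x + lap f x * q x :=
    ((isJetBounded_lap.schwartz_mul hf).add ((IsJetBounded.sum fun i =>
      (isJetBounded_pd i).schwartz_mul (by fun_prop)).const_mul 2)).add
        (isJetBounded_self.schwartz_mul (by fun_prop))
  have leibniz_pd (k : Fin 3) : IsJetBounded fun q x =>
      c * (pd k χ x * pd k q x) + 2 * ∑ i, pd i (pd k χ) x * pd i (pd k q) x
        + lap (pd k χ) x * pd k q x :=
    ((((isJetBounded_pd k).schwartz_mul (by fun_prop)).const_mul c).add ((IsJetBounded.sum fun i =>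
      (isJetBounded_pd_pd i k).schwartz_mul (by fun_prop)).const_mul 2)).add
        ((isJetBounded_pd k).schwartz_mul (by fun_prop))
  ((leibniz hχ).const_mul c).add (((IsJetBounded.sum leibniz_pd).const_mul 2).add
    (leibniz (by fun_prop)))

lemma exists_cutoffRemainder_sq_le (c : ℝ) (hχ : IsSchwartz χ) :
    ∃ C, 0 < C ∧ ∀ q g, Smooth q → (∀ x, c * q x - lap q x = g x) →
      (∀ x, χ =ᶠ[𝓝 x] 1 ∨ g =ᶠ[𝓝 x] 0) → ∀ x,
        ∑ i, pd i (cutoffRemainder c χ q) x ^ 2 ≤ C * jetSq q x ∧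
        lap (cutoffRemainder c χ q) x ^ 2 ≤ C * jetSq q x := by
  choose A hA bound using fun i => (isJetBounded_pd_cutoffRemainder c hχ i).exists_sq_le
  obtain ⟨B, hB, bound_lap⟩ := (isJetBounded_lap_cutoffRemainder c hχ).exists_sq_le
  have hA' : 0 ≤ ∑ i, A i := Finset.sum_nonneg fun i _ => hA i
  refine ⟨∑ i, A i + B + 1, by positivity, fun q g hq hqg h x => ⟨?_, ?_⟩⟩
  · calc ∑ i, pd i (cutoffRemainder c χ q) x ^ 2 ≤ ∑ i, A i * jetSq q x := by
          simp only [pd_cutoffRemainder hχ.contDiff hq]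
          exact Finset.sum_le_sum fun i _ => bound i q x
      _ ≤ _ := by
          rw [← Finset.sum_mul]
          gcongr
          · exact jetSq_nonneg q x
          · linarith
  · rw [lap_cutoffRemainder hχ.contDiff hq hqg h]
    refine (bound_lap q x).trans ?_
    gcongr
    · exact jetSq_nonneg q x
    · linarith

end Corrector

section LocalSolvability

variable {f : E3 → ℝ} {r s c : ℝ}

lemma exists_isSchwartz_eventuallyEq_one (hr : 0 < r) (hrs : r < s) :
    ∃ χ : E3 → ℝ, IsSchwartz χ ∧ tsupport χ ⊆ ball 0 s ∧ (∀ x, |χ x| ≤ 1) ∧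
      ∀ x ∈ ball 0 r, χ =ᶠ[𝓝 x] 1 := by
  let χ : ContDiffBump (0 : E3) :=
    ⟨r, (r + s) / 2, hr, by linarith⟩
  refine ⟨χ, isSchwartz_of_hasCompactSupport χ.contDiff χ.hasCompactSupport, ?_,
    fun x => abs_le.2 ⟨by linarith [χ.nonneg (x := x)], χ.le_one⟩,
    fun x hx => χ.eventuallyEq_one_of_mem_ball hx⟩
  rw [χ.tsupport_eq]
  exact closedBall_subset_ball (by change (r + s) / 2 < s; linarith)

lemma hasCompactSupport_of_tsupport_subset_ball {F : Type*} [Zero F] {f : E3 → F}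
    (hf : tsupport f ⊆ ball 0 r) : HasCompactSupport f :=
  (isCompact_closedBall 0 r).of_isClosed_subset (isClosed_tsupport f)
    (hf.trans ball_subset_closedBall)

lemma exists_lap_add_le_unit (hr : 0 < r) (hrs : r < s) : ∃ C, 0 < C ∧ ∀ g : E3 → ℝ, Smooth g →
    tsupport g ⊆ ball 0 r → ∃ Q : E3 → ℝ, Smooth Q ∧ tsupport Q ⊆ ball 0 s ∧
      ∫ x, ∑ i, pd i (fun y => lap Q y + g y) x ^ 2 ≤ C * ∫ x, g x ^ 2 ∧
      ∫ x, lap (fun y => lap Q y + g y) x ^ 2 ≤ C * ∫ x, g x ^ 2 := by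
  obtain ⟨χ, hχ, hχs, -, hχ_one⟩ := exists_isSchwartz_eventuallyEq_one hr hrs
  obtain ⟨C, hC, bound⟩ := exists_cutoffRemainder_sq_le ((2 * π) ^ 2) hχ
  refine ⟨C, hC, fun g hg hgs => ?_⟩
  have hgc := hasCompactSupport_of_tsupport_subset_ball hgs
  obtain ⟨q, hq, hqg⟩ := (isSchwartz_of_hasCompactSupport hg hgc).exists_resolvent
  have locally_one_or_zero (x : E3) : χ =ᶠ[𝓝 x] 1 ∨ g =ᶠ[𝓝 x] 0 := by
    by_cases hx : x ∈ ball 0 r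
    · exact .inl (hχ_one x hx)
    · exact .inr (notMem_tsupport_iff_eventuallyEq.1 fun h => hx (hgs h))
  have integral_jetSq_le : ∫ x, jetSq q x ≤ ∫ x, g x ^ 2 := by
    simp only [← hqg]
    exact hq.integral_jetSq_le (by nlinarith [pi_gt_three])
  have integral_le {F : E3 → ℝ} (hF : 0 ≤ F) (hFC : ∀ x, F x ≤ C * jetSq q x) :
      ∫ x, F x ≤ C * ∫ x, g x ^ 2 :=
    calc ∫ x, F x ≤ ∫ x, C * jetSq q x := integral_mono_of_nonneg (.of_forall hF)
          (hq.integrable_jetSq.const_mul C) (.of_forall hFC)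
      _ ≤ C * ∫ x, g x ^ 2 := by
          rw [integral_const_mul]
          gcongr
  have remainder_le := bound q g hq.contDiff hqg locally_one_or_zero
  refine ⟨fun x => χ x * q x, by fun_prop, tsupport_mul_subset_left.trans hχs, ?_⟩
  rw [lap_mul_add_eq_cutoffRemainder hχ.contDiff hq.contDiff hqg locally_one_or_zero]
  exact ⟨integral_le (fun x => Finset.sum_nonneg fun i _ => sq_nonneg _)
    fun x => (remainder_le x).1, integral_le (fun x => sq_nonneg _) fun x => (remainder_le x).2⟩

lemma tsupport_comp_smul_subset_ball (hc : 0 < c) (hf : tsupport f ⊆ ball 0 r) :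
    tsupport (fun x => f (c • x)) ⊆ ball 0 (c⁻¹ * r) := by
  intro x hx
  have := hf (tsupport_comp_subset_preimage f (f := fun y : E3 => c • y) (by fun_prop) hx)
  simpa [norm_smul, abs_of_pos hc, lt_inv_mul_iff₀ hc] using this

lemma pd_pd_comp_smul (hf : Smooth f) (i j : Fin 3) (c : ℝ) (x : E3) :
    pd i (pd j fun y => f (c • y)) x = c ^ 2 * pd i (pd j f) (c • x) := by
  simp only [pd_comp_smul]
  rw [pd_const_mul (by fun_prop), pd_comp_smul]
  ring

lemma lap_comp_smul (hf : Smooth f) (c : ℝ) :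
    lap (fun y => f (c • y)) = fun x => c ^ 2 * lap f (c • x) := by
  ext x
  simp only [lap, pd_pd_comp_smul hf, Finset.mul_sum]

lemma exists_lap_add_le (hr : 0 < r) (hrs : r < s) : ∃ C, 0 < C ∧ ∀ R > 0, ∀ g : E3 → ℝ,
    Smooth g → tsupport g ⊆ ball 0 (R * r) →
      ∃ Q : E3 → ℝ, Smooth Q ∧ tsupport Q ⊆ ball 0 (R * s) ∧
      ∫ x, ∑ i, pd i (fun y => lap Q y + g y) x ^ 2 ≤ C / R ^ 2 * ∫ x, g x ^ 2 ∧
      ∫ x, lap (fun y => lap Q y + g y) x ^ 2 ≤ C / R ^ 4 * ∫ x, g x ^ 2 := by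
  obtain ⟨C, hC, unit⟩ := exists_lap_add_le_unit hr hrs
  refine ⟨C, hC, fun R hR g hg hgs => ?_⟩
  obtain ⟨Q, hQ, hQs, hgrad, hlap⟩ := unit (fun x => g (R • x)) (by fun_prop)
    (by simpa [hR.ne'] using tsupport_comp_smul_subset_ball hR hgs)
  set Y := fun y => lap Q y + g (R • y) with hY
  have hYs : Smooth Y := by fun_prop
  have rescaled : (fun y => lap (fun x => R ^ 2 * Q (R⁻¹ • x)) y + g y)
      = fun y => Y (R⁻¹ • y) := by
    rw [lap_const_mul (by fun_prop), lap_comp_smul hQ]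
    ext y
    simp [hY, hR.ne']
  have integral_scale (f : E3 → ℝ) : ∫ x, f (R⁻¹ • x) = R ^ 3 * ∫ x, f x := by
    simp [Measure.integral_comp_inv_smul_of_nonneg volume f hR.le]
  have integral_g : ∫ x, g x ^ 2 = R ^ 3 * ∫ x, g (R • x) ^ 2 := by
    simp [← integral_scale, hR.ne']
  refine ⟨fun x => R ^ 2 * Q (R⁻¹ • x), by fun_prop, tsupport_mul_subset_right.trans
    (by simpa using tsupport_comp_smul_subset_ball (inv_pos.2 hR) hQs), ?_, ?_⟩
  · simp only [rescaled, pd_comp_smul, mul_pow, ← Finset.mul_sum]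
    rw [integral_const_mul, integral_scale fun x => ∑ i, pd i Y x ^ 2, integral_g]
    calc _ ≤ R⁻¹ ^ 2 * (R ^ 3 * (C * ∫ x, g (R • x) ^ 2)) := by gcongr
      _ = _ := by field_simp
  · simp only [rescaled, lap_comp_smul hYs, mul_pow]
    rw [integral_const_mul, integral_scale fun x => lap Y x ^ 2, integral_g]
    calc _ ≤ (R⁻¹ ^ 2) ^ 2 * (R ^ 3 * (C * ∫ x, g (R • x) ^ 2)) := by gcongr
      _ = _ := by field_simp

end LocalSolvability

section DivergenceCorrector

open scoped Gradient

variable {f : E3 → ℝ} {v : E3 → E3} {r s : ℝ}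

lemma vdiv_sq_le (v : E3 → E3) (x : E3) : vdiv v x ^ 2 ≤ 3 * gradSq v x := by
  unfold vdiv gradSq
  calc (∑ i, pd i (fun y => v y i) x) ^ 2 ≤ 3 * ∑ i, pd i (fun y => v y i) x ^ 2 := by
        simpa using sq_sum_le_card_mul_sum_sq (s := Finset.univ)
          (f := fun i => pd i (fun y => v y i) x)
    _ ≤ _ := by
        gcongr with i
        exact Finset.single_le_sum (f := fun k => pd k (fun y => v y i) x ^ 2)
          (fun k _ => sq_nonneg _) (Finset.mem_univ i)

@[fun_prop]
lemma contDiff_gradient (hf : Smooth f) : Smooth (∇ f) :=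
  contDiff_euclidean.2 fun j => by
    simp only [gradient_apply_eq_pd]
    exact contDiff_pd hf j

lemma integrable_gradSq (hv : Smooth v) (hvc : HasCompactSupport v) : Integrable (gradSq v) := by
  refine integrable_finsetSum _ fun j _ => integrable_finsetSum _ fun i _ => ?_
  have := isSchwartz_of_hasCompactSupport (f := fun x => v x j) (by fun_prop)
    (hasCompactSupport_apply hvc j)
  exact IsSchwartz.integrable (by fun_prop)

lemma gradSq_sub_gradient_le {Y : E3 → E3} {D : E3 → ℝ} (hY : Smooth Y) (hD : Smooth D) (d : ℝ)
    (x : E3) (hlap : lap D x = vdiv Y x - d) :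
    gradSq (fun y => Y y - ∇ D y) x ≤ 14 * gradSq Y x + 4 * d ^ 2
      - 2 * (lap D x ^ 2 - ∑ j, ∑ i, pd j (pd i D) x ^ 2) := by
  have split : gradSq (fun y => Y y - ∇ D y) x
      ≤ 2 * gradSq Y x + 2 * ∑ j, ∑ i, pd j (pd i D) x ^ 2 := by
    simp only [gradSq, PiLp.sub_apply, gradient_apply_eq_pd, Finset.mul_sum,
      ← Finset.sum_add_distrib]
    gcongr with j _ i
    rw [pd_sub (by fun_prop) (by fun_prop), pd_comm (i := i) (j := j) (by fun_prop)]
    linarith [add_sq_le (a := pd i (fun y => Y y j) x) (b := -pd j (pd i D) x)]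
  have := vdiv_sq_le Y x
  have := add_sq_le (a := vdiv Y x) (b := -d)
  rw [← sub_eq_add_neg, ← hlap] at this
  linarith

lemma integral_gradSq_sub_gradient_le {Y : E3 → E3} {D d : E3 → ℝ} (hY : Smooth Y)
    (hYc : HasCompactSupport Y) (hD : Smooth D) (hDc : HasCompactSupport D)
    (hd : Integrable fun x => d x ^ 2) (hlap : ∀ x, lap D x = vdiv Y x - d x) :
    ∫ x, gradSq (fun y => Y y - ∇ D y) x ≤ 14 * (∫ x, gradSq Y x) + 4 * ∫ x, d x ^ 2 := by
  have hY_int : Integrable (gradSq Y) := integrable_gradSq hY hYc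
  rw [← integral_const_mul, ← integral_const_mul, ← integral_add (hY_int.const_mul _)
    (hd.const_mul _)]
  refine integral_le_of_le_add_mem_integralKer (gradSq_nonneg _) (Submodule.smul_mem _ (-2)
    ((isSchwartz_of_hasCompactSupport hD hDc).resolvent_energy_mem_integralKer 0))
    ((hY_int.const_mul _).add (hd.const_mul _)) fun x => ?_
  refine (gradSq_sub_gradient_le hY hD (d x) x (hlap x)).trans_eq ?_
  simp
  ring

lemma vdiv_gradient (f : E3 → ℝ) (x : E3) : vdiv (∇ f) x = lap f x := by
  simp only [vdiv, gradient_apply_eq_pd, lap]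

lemma lapAddGradSq_sub_gradient {Y : E3 → E3} {D : E3 → ℝ} (hY : Smooth Y) (hD : Smooth D)
    (x : E3) : lapAddGradSq (fun y => Y y - ∇ D y) (lap D) x
      = ∑ j, lap (fun y => Y y j) x ^ 2 := by
  refine Finset.sum_congr rfl fun j _ => ?_
  simp (disch := fun_prop) only [PiLp.sub_apply, gradient_apply_eq_pd, lap_sub, pd_lap]
  ring

lemma sum_integral_sq_eq (hv : Smooth v) (hvc : HasCompactSupport v) :
    ∑ j, ∫ x, v x j ^ 2 = ∫ x, ‖v x‖ ^ 2 := by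
  simp only [EuclideanSpace.real_norm_sq_eq]
  refine (integral_finsetSum _ fun j _ => ?_).symm
  have := isSchwartz_of_hasCompactSupport (f := fun x => v x j) (by fun_prop)
    (hasCompactSupport_apply hvc j)
  exact IsSchwartz.integrable (by fun_prop)

lemma exists_lap_eq_vdiv_sub_vdiv (hr : 0 < r) (hrs : r < s) : ∃ C, 0 < C ∧ ∀ R > 0,
    ∀ v : E3 → E3, Smooth v → tsupport v ⊆ ball 0 (R * r) → ∃ (Y : E3 → E3) (D : E3 → ℝ),
      Smooth Y ∧ Smooth D ∧ tsupport Y ⊆ ball 0 (R * s) ∧ tsupport D ⊆ ball 0 (R * s) ∧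
      (∀ x, lap D x = vdiv Y x - vdiv v x) ∧
      ∫ x, gradSq Y x ≤ C / R ^ 2 * ∫ x, ‖v x‖ ^ 2 ∧
      ∫ x, ∑ j, lap (fun y => Y y j) x ^ 2 ≤ C / R ^ 4 * ∫ x, ‖v x‖ ^ 2 := by
  obtain ⟨C, hC, scalar⟩ := exists_lap_add_le hr hrs
  refine ⟨C, hC, fun R hR v hv hvs => ?_⟩
  have hvj (j : Fin 3) : tsupport (fun x => v x j) ⊆ ball 0 (R * r) :=
    (tsupport_apply_subset v j).trans hvs
  choose Q hQ hQs hgrad hlap using fun j => scalar R hR _ (by fun_prop) (hvj j)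
  have hYj (j : Fin 3) : tsupport (fun x => lap (Q j) x + v x j) ⊆ ball 0 (R * s) :=
    tsupport_fun_add_subset ((tsupport_lap_subset _).trans (hQs j))
      ((hvj j).trans (ball_subset_ball (by gcongr)))
  have hYj_schwartz (j : Fin 3) : IsSchwartz fun x => lap (Q j) x + v x j :=
    isSchwartz_of_hasCompactSupport (by fun_prop)
      (hasCompactSupport_of_tsupport_subset_ball (hYj j))
  rw [← sum_integral_sq_eq hv (hasCompactSupport_of_tsupport_subset_ball hvs), Finset.mul_sum,
    Finset.mul_sum]
  refine ⟨fun x => WithLp.toLp 2 fun j => lap (Q j) x + v x j, fun x => ∑ j, pd j (Q j) x,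
    by fun_prop, by fun_prop, tsupport_subset_of_forall_apply hYj,
    tsupport_fun_sum_subset fun j => (tsupport_pd_subset _ _).trans (hQs j), fun x => ?_, ?_, ?_⟩
  · simp (disch := fun_prop) only [lap_sum, pd_lap, vdiv, pd_add, Finset.sum_add_distrib]
    ring
  · simp only [gradSq]
    rw [integral_finsetSum _ fun j _ => IsSchwartz.integrable (by fun_prop)]
    gcongr with j
    exact hgrad j
  · simp only
    rw [integral_finsetSum _ fun j _ => IsSchwartz.integrable (by fun_prop)]
    gcongr with j
    exact hlap j

lemma exists_divergence_corrector (hr : 0 < r) (hrs : r < s) : ∃ C, 0 < C ∧ ∀ R > 0,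
    ∀ v : E3 → E3, Smooth v → tsupport v ⊆ ball 0 (R * r) → ∃ (Z : E3 → E3) (E : E3 → ℝ),
      Smooth Z ∧ Smooth E ∧ tsupport Z ⊆ ball 0 (R * s) ∧ tsupport E ⊆ ball 0 (R * s) ∧
      (∀ x, vdiv Z x = vdiv v x) ∧
      ∫ x, gradSq Z x ≤ C * ((∫ x, ‖v x‖ ^ 2) / R ^ 2 + ∫ x, vdiv v x ^ 2) ∧
      ∫ x, lapAddGradSq Z E x ≤ C / R ^ 4 * ∫ x, ‖v x‖ ^ 2 := by
  obtain ⟨C, hC, potential⟩ := exists_lap_eq_vdiv_sub_vdiv hr hrs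
  refine ⟨14 * C + 4, by positivity, fun R hR v hv hvs => ?_⟩
  obtain ⟨Y, D, hY, hD, hYs, hDs, hlap, hgradY, hlapY⟩ := potential R hR v hv hvs
  have hdiv : IsSchwartz (vdiv v) := isSchwartz_of_hasCompactSupport (by fun_prop)
    (hasCompactSupport_of_tsupport_subset_ball ((tsupport_vdiv_subset v).trans hvs))
  refine ⟨fun x => Y x - ∇ D x, lap D, by fun_prop, by fun_prop,
    (tsupport_sub Y (∇ D)).trans
      (Set.union_subset hYs ((tsupport_gradient_subset D).trans hDs)),
    (tsupport_lap_subset D).trans hDs, fun x => ?_, ?_, ?_⟩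
  · rw [vdiv_sub (by fun_prop) (by fun_prop), vdiv_gradient, hlap, sub_sub_cancel]
  · calc _ ≤ 14 * (∫ x, gradSq Y x) + 4 * ∫ x, vdiv v x ^ 2 :=
          integral_gradSq_sub_gradient_le hY (hasCompactSupport_of_tsupport_subset_ball hYs) hD
            (hasCompactSupport_of_tsupport_subset_ball hDs)
            (IsSchwartz.integrable (by fun_prop)) hlap
      _ ≤ 14 * (C / R ^ 2 * ∫ x, ‖v x‖ ^ 2) + 4 * ∫ x, vdiv v x ^ 2 := by gcongr
      _ ≤ 14 * (C / R ^ 2 * ∫ x, ‖v x‖ ^ 2) + 4 * (∫ x, vdiv v x ^ 2)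
          + (4 * ((∫ x, ‖v x‖ ^ 2) / R ^ 2) + 14 * C * ∫ x, vdiv v x ^ 2) :=
          le_add_of_nonneg_right (by positivity)
      _ = _ := by ring
  · simp only [lapAddGradSq_sub_gradient hY hD]
    refine hlapY.trans ?_
    gcongr
    linarith

end DivergenceCorrector

section Cutoff

open scoped Gradient

variable {f : E3 → ℝ}

/-- A smooth cutoff function equal to `1` on the ball of radius `R`, supported in the ball of
radius `3R/2`, with its derivatives controlled by `κ` in the form the energy estimate asks for. -/
structure IsCutoff (κ R : ℝ) (η : E3 → ℝ) : Prop where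
  smooth : Smooth η
  abs_le_one : ∀ x, |η x| ≤ 1
  eq_one : ∀ x ∈ ball 0 R, η x = 1
  tsupport_subset : tsupport η ⊆ ball 0 (R * (3 / 2))
  sq_norm_gradient_le : ∀ x, ‖∇ η x‖ ^ 2 ≤ κ
  norm_gradient_sq_le : ∀ x, ‖∇ (fun y => η y ^ 2) x‖ ≤ κ
  abs_hessian_sq_le : ∀ x i j, |pd i (pd j fun y => η y ^ 2) x| ≤ κ

lemma gradient_comp_smul (f : E3 → ℝ) (c : ℝ) (x : E3) :
    ∇ (fun y => f (c • y)) x = c • ∇ f (c • x) := by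
  ext i
  simp only [gradient_apply_eq_pd, pd_comp_smul, PiLp.smul_apply, smul_eq_mul]

lemma exists_norm_gradient_le_and_abs_hessian_le (hf : Smooth f) (hfc : HasCompactSupport f) :
    ∃ K, 0 ≤ K ∧ (∀ x, ‖∇ f x‖ ≤ K) ∧ ∀ x i j, |pd i (pd j f) x| ≤ K := by
  obtain ⟨K₁, hK₁⟩ := HasCompactSupport.exists_bound_of_continuous
    (hfc.of_isClosed_subset (isClosed_tsupport _) (tsupport_gradient_subset f))
    (contDiff_gradient hf).continuous
  choose K hK using fun k : Fin 3 × Fin 3 => HasCompactSupport.exists_bound_of_continuous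
    (hasCompactSupport_pd (hasCompactSupport_pd hfc k.2) k.1)
    (contDiff_pd (contDiff_pd hf k.2) k.1).continuous
  obtain ⟨K₂, hK₂⟩ := Finite.exists_le K
  exact ⟨max K₁ K₂, le_max_of_le_left ((norm_nonneg _).trans (hK₁ 0)),
    fun x => le_max_of_le_left (hK₁ x),
    fun x i j => le_max_of_le_right ((hK (i, j) x).trans (hK₂ (i, j)))⟩

lemma exists_isCutoff :
    ∃ K, 0 ≤ K ∧ ∀ R > 0, ∃ η, IsCutoff (K * (R⁻¹ + R⁻¹ ^ 2)) R η := by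
  obtain ⟨χ, hχ, hχs, hχ_le, hχ_one⟩ :=
    exists_isSchwartz_eventuallyEq_one (r := 1) (s := 3 / 2) one_pos (by norm_num)
  have hχc := hasCompactSupport_of_tsupport_subset_ball hχs
  obtain ⟨K₁, -, grad_le, -⟩ := exists_norm_gradient_le_and_abs_hessian_le hχ.contDiff hχc
  obtain ⟨K₂, hK₂, grad_sq_le, hess_sq_le⟩ := exists_norm_gradient_le_and_abs_hessian_le
    (f := fun x => χ x ^ 2) (by fun_prop) (hχc.comp_left (g := fun t : ℝ => t ^ 2) (by simp))
  refine ⟨K₁ ^ 2 + K₂, by positivity, fun R hR => ⟨fun x => χ (R⁻¹ • x), ?_⟩⟩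
  have hR' : 0 < R⁻¹ := inv_pos.2 hR
  have le_of_le {a : ℝ} (ha : a ≤ R⁻¹ ^ 2 * (K₁ ^ 2 + K₂) + R⁻¹ * (K₁ ^ 2 + K₂)) :
      a ≤ (K₁ ^ 2 + K₂) * (R⁻¹ + R⁻¹ ^ 2) := ha.trans_eq (by ring)
  refine ⟨by fun_prop, fun x => hχ_le _, fun x hx => (hχ_one _ ?_).self_of_nhds,
    by simpa using tsupport_comp_smul_subset_ball hR' hχs, fun x => le_of_le ?_,
    fun x => le_of_le ?_, fun x i j => le_of_le ?_⟩
  · simpa [norm_smul, abs_of_pos hR, inv_mul_lt_one₀ hR] using hx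
  · rw [gradient_comp_smul, norm_smul, mul_pow, Real.norm_of_nonneg hR'.le]
    refine le_add_of_le_of_nonneg ?_ (by positivity)
    gcongr
    exact le_add_of_le_of_nonneg (by gcongr; exact grad_le _) hK₂
  · rw [gradient_comp_smul fun y => χ y ^ 2, norm_smul, Real.norm_of_nonneg hR'.le]
    refine le_add_of_nonneg_of_le (by positivity) ?_
    gcongr
    exact le_add_of_nonneg_of_le (by positivity) (grad_sq_le _)
  · rw [pd_pd_comp_smul (f := fun y => χ y ^ 2) (by fun_prop), abs_mul, abs_of_pos (by positivity)]
    refine le_add_of_le_of_nonneg ?_ (by positivity)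
    gcongr
    exact le_add_of_nonneg_of_le (by positivity) (hess_sq_le _ i j)

end Cutoff

section Caccioppoli

open scoped Gradient

variable {u w b : E3 → E3} {P η : E3 → ℝ} {κ M R : ℝ}

namespace IsCutoff

lemma tsupport_subset_ball_two_mul (h : IsCutoff κ R η) (hR : 0 < R) :
    tsupport η ⊆ ball 0 (2 * R) :=
  h.tsupport_subset.trans (ball_subset_ball (by linarith))

lemma energyRemainder_le_indicator (h : IsCutoff κ R η) (hR : 0 < R) (hu : ∀ x, ‖u x‖ ≤ M)
    (hb : ∀ x, ‖b x‖ ≤ M) (x : E3) :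
    energyRemainder u w b η x ≤ (4 + M) * κ *
      (ball 0 (2 * R)).indicator (fun y => ‖u y‖ ^ 2 + ‖b y‖ ^ 2 + ‖w y‖ ^ 2) x := by
  by_cases hx : x ∈ ball 0 (2 * R)
  · rw [Set.indicator_of_mem hx]
    exact energyRemainder_le (hu x) (hb x) (h.sq_norm_gradient_le x) (h.norm_gradient_sq_le x)
      (h.abs_hessian_sq_le x)
  · rw [Set.indicator_of_notMem hx, mul_zero, energyRemainder_eq_zero_of_notMem_tsupport
      fun hx' => hx (h.tsupport_subset_ball_two_mul hR hx')]

lemma norm_sq_smul_le (h : IsCutoff κ R η) (x : E3) : ‖η x ^ 2 • u x‖ ≤ ‖u x‖ := by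
  rw [norm_smul, norm_pow, Real.norm_eq_abs]
  exact mul_le_of_le_one_left (norm_nonneg _) (pow_le_one₀ (abs_nonneg _) (h.abs_le_one x))

lemma sq_vdiv_sq_smul_le (h : IsCutoff κ R η) (hu : Smooth u) (hdiv : ∀ x, vdiv u x = 0) (x : E3) :
    vdiv (fun y => η y ^ 2 • u y) x ^ 2 ≤ κ ^ 2 * ‖u x‖ ^ 2 := by
  have := h.smooth
  rw [vdiv_smul (φ := fun y => η y ^ 2) (by fun_prop) (by fun_prop)]
  simp only [hdiv, mul_zero, zero_add]
  rw [← mul_pow, ← sq_abs, mul_comm κ]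
  gcongr
  exact (abs_advect_le _ _ _).trans (by gcongr; exact h.norm_gradient_sq_le x)

lemma tsupport_sq_smul_subset (h : IsCutoff κ R η) (u : E3 → E3) :
    tsupport (fun y => η y ^ 2 • u y) ⊆ ball 0 (R * (3 / 2)) :=
  (tsupport_smul_subset_left (fun y => η y ^ 2) u).trans
    ((tsupport_fun_sq_subset η).trans h.tsupport_subset)

end IsCutoff

lemma integrableOn_ball {f : E3 → ℝ} (hf : Continuous f) (r : ℝ) : IntegrableOn f (ball 0 r) :=
  (hf.continuousOn.integrableOn_compact (isCompact_closedBall 0 r)).mono_set ball_subset_closedBall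

lemma integral_le_setIntegral_of_support_subset {α : Type*} [MeasurableSpace α] {μ : Measure α}
    {f g : α → ℝ} {s : Set α} (hf : 0 ≤ f) (hfs : Function.support f ⊆ s)
    (hg : IntegrableOn g s μ) (hfg : ∀ x, f x ≤ g x) : ∫ x, f x ∂μ ≤ ∫ x in s, g x ∂μ := by
  rw [← setIntegral_eq_integral_of_forall_compl_eq_zero fun x hx =>
    Function.notMem_support.1 fun h => hx (hfs h)]
  exact integral_mono_of_nonneg (.of_forall hf) hg (.of_forall hfg)

lemma exists_divergence_corrector_of_isCutoff : ∃ C, 0 < C ∧ ∀ {u : E3 → E3} {η : E3 → ℝ}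
    {κ R : ℝ}, Smooth u → (∀ x, vdiv u x = 0) → 0 < R → IsCutoff κ R η →
      ∃ (Z : E3 → E3) (E : E3 → ℝ), Smooth Z ∧ Smooth E ∧ tsupport Z ⊆ ball 0 (2 * R) ∧
        tsupport E ⊆ ball 0 (2 * R) ∧ (∀ x, vdiv Z x = vdiv (fun y => η y ^ 2 • u y) x) ∧
        (∫ x, gradSq Z x) + ∫ x, lapAddGradSq Z E x
          ≤ C * (R⁻¹ ^ 2 + R⁻¹ ^ 4 + κ ^ 2) * ∫ x in ball 0 (2 * R), ‖u x‖ ^ 2 := by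
  obtain ⟨C, hC, corrector⟩ :=
    exists_divergence_corrector (r := 3 / 2) (s := 2) (by norm_num) (by norm_num)
  refine ⟨C, hC, fun {u η κ R} hu hdiv hR h => ?_⟩
  have hη := h.smooth
  have hvs := h.tsupport_sq_smul_subset u
  have hvs2 := hvs.trans (ball_subset_ball (by linarith : R * (3 / 2) ≤ 2 * R))
  obtain ⟨Z, E, hZ, hE, hZs, hEs, hZdiv, hgrad, hlap⟩ :=
    corrector R hR (fun y => η y ^ 2 • u y) (by fun_prop) hvs
  rw [mul_comm R] at hZs hEs
  have sq_norm_le : ∫ x, ‖η x ^ 2 • u x‖ ^ 2 ≤ ∫ x in ball 0 (2 * R), ‖u x‖ ^ 2 :=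
    integral_le_setIntegral_of_support_subset (fun x => sq_nonneg _)
      (fun x hx => hvs2 (subset_tsupport _ fun h0 => hx (by simp [h0])))
      (integrableOn_ball (by have := hu.continuous; fun_prop) _)
      fun x => by gcongr; exact h.norm_sq_smul_le x
  have sq_vdiv_le : ∫ x, vdiv (fun y => η y ^ 2 • u y) x ^ 2
      ≤ κ ^ 2 * ∫ x in ball 0 (2 * R), ‖u x‖ ^ 2 := by
    rw [← integral_const_mul]
    exact integral_le_setIntegral_of_support_subset (fun x => sq_nonneg _)
      (fun x hx => hvs2 (tsupport_vdiv_subset _ (subset_tsupport _ fun h0 => hx (by simp [h0]))))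
      (integrableOn_ball (by have := hu.continuous; fun_prop) _)
      (h.sq_vdiv_sq_smul_le hu hdiv)
  refine ⟨Z, E, hZ, hE, hZs, hEs, hZdiv, (add_le_add hgrad hlap).trans ?_⟩
  calc _ ≤ C * ((∫ x in ball 0 (2 * R), ‖u x‖ ^ 2) / R ^ 2
          + κ ^ 2 * ∫ x in ball 0 (2 * R), ‖u x‖ ^ 2)
        + C / R ^ 4 * ∫ x in ball 0 (2 * R), ‖u x‖ ^ 2 := by gcongr
    _ = _ := by field_simp; ring

lemma IsMMPSolution.exists_indicator_gradSq_le (h : IsMMPSolution u w b P)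
    (hη : IsCutoff κ R η) (hR : 0 < R) (hu : ∀ x, ‖u x‖ ≤ M) (hb : ∀ x, ‖b x‖ ≤ M) {t : ℝ}
    (ht : 0 < t) {Z : E3 → E3} {E : E3 → ℝ} (hZ : Smooth Z) (hE : Smooth E)
    (hZs : tsupport Z ⊆ ball 0 (2 * R)) (hEs : tsupport E ⊆ ball 0 (2 * R))
    (hdiv : ∀ x, vdiv Z x = vdiv (fun y => η y ^ 2 • u y) x) :
    ∃ e ∈ integralKer volume, ∀ x,
      (ball 0 R).indicator (fun y => gradSq u y + gradSq b y + gradSq w y) x ≤ e x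
        + ((2 * (4 + M) * κ + (1 + M ^ 2) / t) *
            (ball 0 (2 * R)).indicator (fun y => ‖u y‖ ^ 2 + ‖b y‖ ^ 2 + ‖w y‖ ^ 2) x
          + 4 * t * (gradSq Z x + lapAddGradSq Z E x)) := by
  have hη_smooth := hη.smooth
  have hu_smooth := h.smooth_u
  obtain ⟨e₁, he₁, energy⟩ := h.exists_sq_mul_gradSq_le hη.smooth
    (hasCompactSupport_of_tsupport_subset_ball hη.tsupport_subset)
  obtain ⟨e₂, he₂, pressure⟩ := h.exists_neg_advect_pressure_le hu hb ht
    (v := fun y => η y ^ 2 • u y) (by fun_prop)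
    (hasCompactSupport_of_tsupport_subset_ball (hη.tsupport_sq_smul_subset u)) hZ
    (hasCompactSupport_of_tsupport_subset_ball hZs) hE
    (hasCompactSupport_of_tsupport_subset_ball hEs) hdiv hZs hEs
  refine ⟨_, (integralKer volume).smul_mem 2 (add_mem he₁ he₂), fun x => ?_⟩
  have remainder := hη.energyRemainder_le_indicator (w := w) hR hu hb x
  have indicator_le : (ball 0 R).indicator (fun y => gradSq u y + gradSq b y + gradSq w y) x
      ≤ η x ^ 2 * (gradSq u x + gradSq b x + gradSq w x) := by
    refine Set.indicator_apply_le' (fun hx => by simp [hη.eq_one x hx]) fun _ => ?_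
    have := gradSq_nonneg u x
    have := gradSq_nonneg b x
    have := gradSq_nonneg w x
    positivity
  have advect_smul : advect (fun y => η y ^ 2 • u y) P x = η x ^ 2 * advect u P x := by
    simp only [advect, PiLp.smul_apply, smul_eq_mul, Finset.mul_sum, mul_assoc]
  have energy := energy x
  have pressure := pressure x
  have half : (1 + M ^ 2) / (2 * t) = (1 + M ^ 2) / t / 2 := by ring
  rw [advect_smul, half] at pressure
  simp only [Pi.smul_apply, Pi.add_apply, smul_eq_mul]
  linarith

lemma integrable_lapAddGradSq {Z : E3 → E3} {E : E3 → ℝ} (hZ : Smooth Z)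
    (hZc : HasCompactSupport Z) (hE : Smooth E) (hEc : HasCompactSupport E) :
    Integrable (lapAddGradSq Z E) := by
  have hE_schwartz := isSchwartz_of_hasCompactSupport hE hEc
  have hZ_schwartz (j : Fin 3) : IsSchwartz fun x => Z x j :=
    isSchwartz_of_hasCompactSupport (by fun_prop) (hasCompactSupport_apply hZc j)
  unfold lapAddGradSq
  exact IsSchwartz.integrable (by fun_prop)

lemma IsMMPSolution.integrableOn_sq_norm (h : IsMMPSolution u w b P) (r : ℝ) :
    IntegrableOn (fun x => ‖u x‖ ^ 2 + ‖b x‖ ^ 2 + ‖w x‖ ^ 2) (ball 0 r) := by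
  have := h.smooth_u.continuous
  have := h.smooth_w.continuous
  have := h.smooth_b.continuous
  exact integrableOn_ball (by fun_prop) r

lemma IsMMPSolution.setIntegral_gradSq_le (h : IsMMPSolution u w b P)
    (hη : IsCutoff κ R η) (hR : 0 < R) (hu : ∀ x, ‖u x‖ ≤ M) (hb : ∀ x, ‖b x‖ ≤ M) {t : ℝ}
    (ht : 0 < t) {Z : E3 → E3} {E : E3 → ℝ} (hZ : Smooth Z) (hE : Smooth E)
    (hZs : tsupport Z ⊆ ball 0 (2 * R)) (hEs : tsupport E ⊆ ball 0 (2 * R))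
    (hdiv : ∀ x, vdiv Z x = vdiv (fun y => η y ^ 2 • u y) x) :
    ∫ x in ball 0 R, (gradSq u x + gradSq b x + gradSq w x)
      ≤ (2 * (4 + M) * κ + (1 + M ^ 2) / t)
          * (∫ x in ball 0 (2 * R), (‖u x‖ ^ 2 + ‖b x‖ ^ 2 + ‖w x‖ ^ 2))
        + 4 * t * ((∫ x, gradSq Z x) + ∫ x, lapAddGradSq Z E x) := by
  obtain ⟨e, he, pointwise⟩ := h.exists_indicator_gradSq_le hη hR hu hb ht hZ hE hZs hEs hdiv
  have hZc := hasCompactSupport_of_tsupport_subset_ball hZs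
  have hEc := hasCompactSupport_of_tsupport_subset_ball hEs
  have hS := (integrable_indicator_iff measurableSet_ball).2 (h.integrableOn_sq_norm (2 * R))
  have hgrad := integrable_gradSq hZ hZc
  have hlap := integrable_lapAddGradSq hZ hZc hE hEc
  have hsum : Integrable fun x => 4 * t * (gradSq Z x + lapAddGradSq Z E x) :=
    (hgrad.add hlap).const_mul _
  have gradSq_sum_nonneg (x : E3) : 0 ≤ gradSq u x + gradSq b x + gradSq w x :=
    add_nonneg (add_nonneg (gradSq_nonneg u x) (gradSq_nonneg b x)) (gradSq_nonneg w x)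
  rw [← integral_indicator measurableSet_ball, ← integral_indicator measurableSet_ball,
    ← integral_add hgrad hlap, ← integral_const_mul, ← integral_const_mul,
    ← integral_add (hS.const_mul _) hsum]
  exact integral_le_of_le_add_mem_integralKer
    (Set.indicator_nonneg fun x _ => gradSq_sum_nonneg x) he
    ((hS.const_mul _).add hsum) pointwise

lemma exists_setIntegral_gradSq_le (hM : 0 ≤ M) : ∃ C, 0 < C ∧ ∀ {u w b : E3 → E3} {P : E3 → ℝ},
    IsMMPSolution u w b P → (∀ x, ‖u x‖ ≤ M) → (∀ x, ‖b x‖ ≤ M) → ∀ {R : ℝ}, 0 < R →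
      ∫ x in ball 0 R, (gradSq u x + gradSq b x + gradSq w x) ≤ C * (R⁻¹ + R⁻¹ ^ 2) *
        ∫ x in ball 0 (2 * R), (‖u x‖ ^ 2 + ‖b x‖ ^ 2 + ‖w x‖ ^ 2) := by
  obtain ⟨K, hK, cutoff⟩ := exists_isCutoff
  obtain ⟨C, hC, corrector⟩ := exists_divergence_corrector_of_isCutoff
  refine ⟨2 * (4 + M) * K + (1 + M ^ 2) + 4 * C * (2 + K ^ 2), by positivity,
    fun {u w b P} h hu hb R hR => ?_⟩
  set ρ := R⁻¹ + R⁻¹ ^ 2 with hρ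
  have hρ0 : 0 < ρ := by positivity
  obtain ⟨η, hη⟩ := cutoff R hR
  obtain ⟨Z, E, hZ, hE, hZs, hEs, hdiv, hZE⟩ := corrector h.smooth_u h.div_u hR hη
  have caccioppoli := h.setIntegral_gradSq_le hη hR hu hb (inv_pos.2 hρ0) hZ hE hZs hEs hdiv
  set I := ∫ x in ball 0 (2 * R), (‖u x‖ ^ 2 + ‖b x‖ ^ 2 + ‖w x‖ ^ 2)
  have sq_norm_le : ∫ x in ball 0 (2 * R), ‖u x‖ ^ 2 ≤ I :=
    integral_mono_of_nonneg (.of_forall fun x => sq_nonneg _) (h.integrableOn_sq_norm _)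
      (.of_forall fun x => by simp only; nlinarith [sq_nonneg ‖b x‖, sq_nonneg ‖w x‖])
  have powers_le : R⁻¹ ^ 2 + R⁻¹ ^ 4 + (K * ρ) ^ 2 ≤ (2 + K ^ 2) * ρ ^ 2 := by
    have : 0 ≤ R⁻¹ := (inv_pos.2 hR).le
    rw [mul_pow, add_mul, hρ]
    nlinarith [pow_nonneg this 2, pow_nonneg this 3, pow_nonneg this 4]
  calc _ ≤ _ := caccioppoli
    _ ≤ (2 * (4 + M) * (K * ρ) + (1 + M ^ 2) / ρ⁻¹) * I
        + 4 * ρ⁻¹ * (C * ((2 + K ^ 2) * ρ ^ 2) * I) := by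
      gcongr
      exact hZE.trans (by gcongr)
    _ = _ := by field_simp

end Caccioppoli

section Holder

variable {p : ℝ}

lemma integral_norm_le_rpow_mul_measureReal_rpow {α F : Type*} [MeasurableSpace α]
    [NormedAddCommGroup F] {μ : Measure α} [IsFiniteMeasure μ] {f : α → F} (hp : 1 ≤ p)
    (hf : MemLp f (ENNReal.ofReal p) μ) :
    ∫ x, ‖f x‖ ∂μ ≤ (∫ x, ‖f x‖ ^ p ∂μ) ^ (1 / p) * μ.real Set.univ ^ (1 - 1 / p) := by
  have hp0 : 0 < p := by linarith
  have h1p : (1 : ℝ≥0∞) ≤ ENNReal.ofReal p := by simpa using hp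
  have exponent_nonneg : 0 ≤ 1 / ENNReal.toReal 1 - 1 / (ENNReal.ofReal p).toReal := by
    simpa [ENNReal.toReal_ofReal hp0.le] using inv_le_one_of_one_le₀ hp
  have holder := ENNReal.toReal_mono
    (ENNReal.mul_ne_top hf.2.ne
      (ENNReal.rpow_ne_top_of_nonneg exponent_nonneg (measure_ne_top μ _)))
    (eLpNorm_le_eLpNorm_mul_rpow_measure_univ h1p hf.1)
  rw [ENNReal.toReal_mul, ← ENNReal.toReal_rpow, toReal_eLpNorm hf.1, toReal_eLpNorm hf.1,
    lpNorm_one_eq_integral_norm hf.1, lpNorm_eq_integral_norm_rpow_toReal (by simpa using hp0)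
      ENNReal.ofReal_ne_top hf.1, ENNReal.toReal_ofReal hp0.le] at holder
  simpa [measureReal_def] using holder

lemma volume_real_ball_fin_three {r : ℝ} (hr : 0 ≤ r) :
    volume.real (ball (0 : E3) r) = π * 4 / 3 * r ^ 3 := by
  rw [measureReal_def, EuclideanSpace.volume_ball_fin_three, ENNReal.toReal_mul, ENNReal.toReal_pow,
    ENNReal.toReal_ofReal hr, ENNReal.toReal_ofReal (by positivity), mul_comm]

lemma setIntegral_norm_le_lpnorm {v : E3 → E3} {r : ℝ} (hp : 1 ≤ p) (hr : 0 ≤ r)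
    (hv : Continuous v) :
    ∫ x in ball 0 r, ‖v x‖ ≤ lpnorm p v (ball3 r) * (π * 4 / 3 * r ^ 3) ^ (1 - 1 / p) := by
  have : IsFiniteMeasure (volume.restrict (ball (0 : E3) r)) :=
    isFiniteMeasure_restrict.2 measure_ball_lt_top.ne
  obtain ⟨B, hB⟩ := (isCompact_closedBall (0 : E3) r).exists_bound_of_continuousOn hv.continuousOn
  have hmem : MemLp v (ENNReal.ofReal p) (volume.restrict (ball 0 r)) :=
    .of_bound hv.aestronglyMeasurable B (ae_restrict_of_forall_mem measurableSet_ball fun x hx =>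
      hB x (ball_subset_closedBall hx))
  have holder := integral_norm_le_rpow_mul_measureReal_rpow hp hmem
  rwa [measureReal_restrict_apply_univ, volume_real_ball_fin_three hr] at holder

lemma setIntegral_sq_norm_le_of_norm_le {v : E3 → E3} {M r : ℝ} (hp : 1 ≤ p) (hr : 0 ≤ r)
    (hv : Continuous v) (hM : ∀ x, ‖v x‖ ≤ M) : ∫ x in ball 0 r, ‖v x‖ ^ 2
      ≤ M * (π * 4 / 3 * r ^ 3) ^ (1 - 1 / p) * lpnorm p v (ball3 r) := by
  have hM0 : 0 ≤ M := (norm_nonneg _).trans (hM 0)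
  calc ∫ x in ball 0 r, ‖v x‖ ^ 2 ≤ ∫ x in ball 0 r, M * ‖v x‖ := by
        refine integral_mono (integrableOn_ball (by fun_prop) r)
          (integrableOn_ball (by fun_prop) r) fun x => ?_
        simp only [sq]
        gcongr
        exact hM x
    _ = M * ∫ x in ball 0 r, ‖v x‖ := integral_const_mul _ _
    _ ≤ M * (lpnorm p v (ball3 r) * (π * 4 / 3 * r ^ 3) ^ (1 - 1 / p)) := by
        gcongr
        exact setIntegral_norm_le_lpnorm hp hr hv
    _ = _ := by ring

lemma IsMMPSolution.setIntegral_sq_norm_le_lpnorm {u w b : E3 → E3} {P : E3 → ℝ} {M r : ℝ}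
    (h : IsMMPSolution u w b P) (hp : 1 ≤ p) (hr : 0 ≤ r) (hu : ∀ x, ‖u x‖ ≤ M)
    (hb : ∀ x, ‖b x‖ ≤ M) (hw : ∀ x, ‖w x‖ ≤ M) :
    ∫ x in ball 0 r, (‖u x‖ ^ 2 + ‖b x‖ ^ 2 + ‖w x‖ ^ 2)
      ≤ M * (π * 4 / 3 * r ^ 3) ^ (1 - 1 / p)
        * (lpnorm p u (ball3 r) + lpnorm p b (ball3 r) + lpnorm p w (ball3 r)) := by
  have hu_cont := h.smooth_u.continuous
  have hb_cont := h.smooth_b.continuous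
  have hw_cont := h.smooth_w.continuous
  have hui : IntegrableOn (fun x => ‖u x‖ ^ 2) (ball 0 r) := integrableOn_ball (by fun_prop) r
  have hbi : IntegrableOn (fun x => ‖b x‖ ^ 2) (ball 0 r) := integrableOn_ball (by fun_prop) r
  have hwi : IntegrableOn (fun x => ‖w x‖ ^ 2) (ball 0 r) := integrableOn_ball (by fun_prop) r
  have hubi : IntegrableOn (fun x => ‖u x‖ ^ 2 + ‖b x‖ ^ 2) (ball 0 r) := hui.add hbi
  rw [integral_add hubi hwi, integral_add hui hbi, mul_add, mul_add]
  gcongr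
  exacts [setIntegral_sq_norm_le_of_norm_le hp hr hu_cont hu,
    setIntegral_sq_norm_le_of_norm_le hp hr hb_cont hb,
    setIntegral_sq_norm_le_of_norm_le hp hr hw_cont hw]

lemma inv_add_inv_sq_mul_rpow {m R : ℝ} (hm : 0 ≤ m) (hR : 0 < R) :
    (R⁻¹ + R⁻¹ ^ 2) * (m * (2 * R) ^ 3) ^ (1 - 1 / p)
      = (8 * m) ^ (1 - 1 / p) * (R ^ (1 - 3 / p) + R ^ (2 - 3 / p)) := by
  have split : (m * (2 * R) ^ 3) ^ (1 - 1 / p) = (8 * m) ^ (1 - 1 / p) * R ^ (3 - 3 / p) := by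
    rw [show m * (2 * R) ^ 3 = 8 * m * R ^ (3 : ℝ) by norm_cast; ring,
      mul_rpow (by positivity) (by positivity), ← rpow_mul hR.le]
    ring_nf
  have rpow_one_sub : R ^ (1 - 3 / p) = R⁻¹ ^ 2 * R ^ (3 - 3 / p) := by
    rw [← rpow_natCast, inv_rpow hR.le, ← rpow_neg hR.le, ← rpow_add hR]
    ring_nf
  have rpow_two_sub : R ^ (2 - 3 / p) = R⁻¹ * R ^ (3 - 3 / p) := by
    rw [← rpow_neg_one, ← rpow_add hR]
    ring_nf
  rw [split, rpow_one_sub, rpow_two_sub]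
  ring

end Holder

theorem dirichlet_estimate_bounded_low_p_general {p : ℝ} (hp : 1 ≤ p) (Mu Mb Mw : ℝ) :
    ∃ C : ℝ, 0 < C ∧ ∀ {u w b : E3 → E3} {P : E3 → ℝ}, IsMMPSolution u w b P →
      (∀ x, ‖u x‖ ≤ Mu) → (∀ x, ‖b x‖ ≤ Mb) → (∀ x, ‖w x‖ ≤ Mw) → ∀ {R : ℝ}, 0 < R →
        ∫ x in ball3 R, (gradSq u x + gradSq b x + gradSq w x) ≤
          C * (R ^ (1 - 3 / p) + R ^ (2 - 3 / p)) *
            (lpnorm p u (ball3 (2 * R)) + lpnorm p b (ball3 (2 * R))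
              + lpnorm p w (ball3 (2 * R))) := by
  obtain ⟨M, hM, hMu, hMb, hMw⟩ : ∃ M, 0 < M ∧ Mu ≤ M ∧ Mb ≤ M ∧ Mw ≤ M :=
    ⟨max 1 (max Mu (max Mb Mw)), by simp, by simp, by simp, by simp⟩
  obtain ⟨C, hC, caccioppoli⟩ := exists_setIntegral_gradSq_le hM.le
  refine ⟨C * M * (8 * (π * 4 / 3)) ^ (1 - 1 / p), by positivity,
    fun {u w b P} h hu hb hw R hR => ?_⟩
  have hu := fun x => (hu x).trans hMu
  have hb := fun x => (hb x).trans hMb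
  have hw := fun x => (hw x).trans hMw
  set Λ := lpnorm p u (ball3 (2 * R)) + lpnorm p b (ball3 (2 * R)) + lpnorm p w (ball3 (2 * R))
  calc _ ≤ _ := caccioppoli h hu hb hR
    _ ≤ C * (R⁻¹ + R⁻¹ ^ 2) * (M * (π * 4 / 3 * (2 * R) ^ 3) ^ (1 - 1 / p) * Λ) := by
        gcongr
        exact h.setIntegral_sq_norm_le_lpnorm hp (by positivity) hu hb hw
    _ = C * M * ((R⁻¹ + R⁻¹ ^ 2) * (π * 4 / 3 * (2 * R) ^ 3) ^ (1 - 1 / p)) * Λ := by ring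
    _ = _ := by
        rw [inv_add_inv_sq_mul_rpow (by positivity) hR]; ring

/-- Dirichlet integral estimate for bounded solutions, `p ∈ [1, 3/2)`. -/
theorem dirichlet_estimate_bounded_low_p
    (p : ℝ) (hp1 : 1 ≤ p) (hp2 : p < 3 / 2)
    (Mu Mb Mw : ℝ) :
    ∃ C : ℝ, 0 < C ∧
      ∀ u w b : E3 → E3, ∀ P : E3 → ℝ, IsMMPSolution u w b P →
      (∀ x, ‖u x‖ ≤ Mu) → (∀ x, ‖b x‖ ≤ Mb) → (∀ x, ‖w x‖ ≤ Mw) →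
      ∀ R : ℝ, 1 < R →
        (∫ x in ball3 R, (gradSq u x + gradSq b x + gradSq w x)) ≤
          C * (R ^ (1 - 3 / p) + R ^ (2 - 3 / p)) *
            (lpnorm p u (ball3 (2 * R)) + lpnorm p b (ball3 (2 * R))
              + lpnorm p w (ball3 (2 * R))) := by
  obtain ⟨C, hC, bound⟩ := dirichlet_estimate_bounded_low_p_general hp1 Mu Mb Mw
  exact ⟨C, hC, fun u w b P h hu hb hw R hR => bound h hu hb hw (by linarith)⟩
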